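/- arXiv:1204.4694 — 2 statements merged into one kernel-verified Lean document; each statement's English description precedes it below -/
import Mathlib

section
/- Let φ_k : D → D be a sequence of orientation-preserving homeomorphisms of the closed unit disk, each fixing the origin, converging uniformly (in the C⁰ sense) to a homeomorphism φ : D → D fixing the origin. Assume: (1) for each k there exists an orientation-preserving homeomorphism g_k : D → D fixing the origin and a real number θ_k such that φ_k = g_k⁻¹ ∘ R_{2πθ_k} ∘ g_k; and (2) θ_k → θ as k → ∞, where θ is irrational. Then φ has no periodic points in D ∖ {0}. -/
open Complex Metric Filter Set

/-- The closed unit disk in `ℂ ≅ ℝ²`. -/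
def Disk : Set ℂ := Metric.closedBall 0 1

/-- A homeomorphism of the closed unit disk: a continuous bijection of `Disk`
with continuous inverse. -/
structure DiskHomeo where
  toFun : ℂ → ℂ
  invFun : ℂ → ℂ
  mapsTo : Set.MapsTo toFun Disk Disk
  mapsTo_inv : Set.MapsTo invFun Disk Disk
  left_inv : ∀ z ∈ Disk, invFun (toFun z) = z
  right_inv : ∀ z ∈ Disk, toFun (invFun z) = z
  cont : ContinuousOn toFun Disk
  cont_inv : ContinuousOn invFun Disk

/-- A homeomorphism of the disk is orientation preserving if its restriction to the
boundary circle has topological degree `+1`, i.e. it admits a continuous strictly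
increasing lift `F : ℝ → ℝ` with `F (x+1) = F x + 1`. -/
def OrientationPreserving (h : DiskHomeo) : Prop :=
  ∃ F : ℝ → ℝ, Continuous F ∧ StrictMono F ∧ (∀ x, F (x + 1) = F x + 1) ∧
    ∀ x : ℝ, h.toFun (Complex.exp ((2 * Real.pi * x) * Complex.I)) =
      Complex.exp ((2 * Real.pi * F x) * Complex.I)


open scoped unitInterval

/-- Continuous logarithms exist on convex sets. -/
lemma exists_log_on_convex {E : Type*} [NormedAddCommGroup E] [NormedSpace ℝ E]
    {S : Set E} (hS : Convex ℝ S) (f : E → ℂ) (hf : ContinuousOn f S)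
    (hne : ∀ x ∈ S, f x ≠ 0) (x₀ : E) (hx₀ : x₀ ∈ S) (e₀ : ℂ) (he : Complex.exp e₀ = f x₀) :
    ∃ L : E → ℂ, ContinuousOn L S ∧ L x₀ = e₀ ∧ ∀ x ∈ S, Complex.exp (L x) = f x := by
  classical
  have hseg : ∀ (t : I) (x : S), x₀ + (t : ℝ) • ((x : E) - x₀) ∈ S := by
    intro t x
    exact hS.add_smul_sub_mem hx₀ x.2 t.2
  have hc : Continuous (fun p : I × S => f (x₀ + (p.1 : ℝ) • ((p.2 : E) - x₀))) := by
    refine hf.comp_continuous (by fun_prop) ?_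
    rintro ⟨t, x⟩
    exact hseg t x
  let H : C(I × S, {z : ℂ // z ≠ 0}) :=
    ⟨fun p => ⟨f (x₀ + (p.1 : ℝ) • ((p.2 : E) - x₀)), hne _ (hseg p.1 p.2)⟩,
      hc.subtype_mk _⟩
  have H0 : ∀ a : S, H (0, a) = (⟨_, (ContinuousMap.const S e₀ a).exp_ne_zero⟩ : {z : ℂ // z ≠ 0}) := by
    intro a
    apply Subtype.ext
    simp [H, he]
  let G := Complex.isCoveringMap_exp.liftHomotopy H (ContinuousMap.const S e₀) H0
  have hG : ∀ p, Complex.exp (G p) = H p := by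
    intro p
    have := congrFun (Complex.isCoveringMap_exp.liftHomotopy_lifts H (ContinuousMap.const S e₀) H0) p
    exact congrArg Subtype.val this
  have hG0 : ∀ a, G (0, a) = e₀ := fun a =>
    Complex.isCoveringMap_exp.liftHomotopy_zero H (ContinuousMap.const S e₀) H0 a
  let c : ℂ := e₀ - G (1, ⟨x₀, hx₀⟩)
  have hcexp : Complex.exp c = 1 := by
    rw [Complex.exp_sub, hG, he]
    simp only [H, ContinuousMap.coe_mk, sub_self, smul_zero, add_zero]
    exact div_self (hne _ hx₀)
  refine ⟨fun x => if h : x ∈ S then G (1, ⟨x, h⟩) + c else 0, ?_, ?_, ?_⟩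
  · rw [continuousOn_iff_continuous_domRestrict]
    have : S.domRestrict (fun x => if h : x ∈ S then G (1, ⟨x, h⟩) + c else 0)
        = fun x : S => G (1, x) + c := by
      funext x
      simp [Set.domRestrict]
    rw [this]
    fun_prop
  · simp [hx₀, c]
  · intro x hx
    simp only [hx, dif_pos]
    rw [Complex.exp_add, hcexp, hG]
    simp [H]

lemma angle_nonneg {E : Type*} [TopologicalSpace E] {S : Set E} (hS : IsPreconnected S)
    (u : E → ℝ) (hu : ContinuousOn u S) (x₀ : E) (hx₀ : x₀ ∈ S) (h0 : u x₀ = 0)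
    (hs : ∀ x ∈ S, 0 ≤ Real.sin (u x)) : ∀ x ∈ S, u x ∈ Set.Icc 0 Real.pi := by
  intro x hx
  have hpi := Real.pi_pos
  constructor
  · by_contra hlt
    push Not at hlt
    have : max (u x) (-(Real.pi / 2)) ∈ Set.Icc (u x) (u x₀) := by
      rw [h0]; exact ⟨le_max_left _ _, max_le hlt.le (by linarith)⟩
    obtain ⟨y, hy, hy'⟩ := hS.intermediate_value hx hx₀ hu this
    have h1 := hs y hy
    rw [hy'] at h1
    have : Real.sin (max (u x) (-(Real.pi / 2))) < 0 := by
      apply Real.sin_neg_of_neg_of_neg_pi_lt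
      · exact max_lt hlt (by linarith)
      · exact lt_of_lt_of_le (by linarith) (le_max_right _ _)
    linarith
  · by_contra hlt
    push Not at hlt
    have : min (u x) (Real.pi + Real.pi / 2) ∈ Set.Icc (u x₀) (u x) := by
      rw [h0]; exact ⟨le_min (by linarith) (by linarith), min_le_left _ _⟩
    obtain ⟨y, hy, hy'⟩ := hS.intermediate_value hx₀ hx hu this
    have h1 := hs y hy
    rw [hy'] at h1
    have : 0 < Real.sin (min (u x) (Real.pi + Real.pi / 2) - Real.pi) := by
      apply Real.sin_pos_of_pos_of_lt_pi
      · have := lt_min hlt (by linarith : Real.pi < Real.pi + Real.pi / 2)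
        linarith
      · have := min_le_right (u x) (Real.pi + Real.pi / 2)
        linarith
    rw [Real.sin_sub_pi] at this
    linarith

lemma angle_nonpos {E : Type*} [TopologicalSpace E] {S : Set E} (hS : IsPreconnected S)
    (u : E → ℝ) (hu : ContinuousOn u S) (x₀ : E) (hx₀ : x₀ ∈ S) (h0 : u x₀ = 0)
    (hs : ∀ x ∈ S, Real.sin (u x) ≤ 0) : ∀ x ∈ S, u x ∈ Set.Icc (-Real.pi) 0 := by
  intro x hx
  have := angle_nonneg hS (fun x => - u x) hu.neg x₀ hx₀ (by simp [h0])
    (fun x hx => by rw [Real.sin_neg]; linarith [hs x hx]) x hx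
  constructor <;> linarith [this.1, this.2]

lemma sin_im_nonneg {L v : ℂ} (h : Complex.exp L = v) (hv : 0 ≤ v.im) : 0 ≤ Real.sin L.im := by
  rw [← h, Complex.exp_im] at hv
  exact nonneg_of_mul_nonneg_right hv (Real.exp_pos _)

lemma sin_im_nonpos {L v : ℂ} (h : Complex.exp L = v) (hv : v.im ≤ 0) : Real.sin L.im ≤ 0 := by
  rw [← h, Complex.exp_im] at hv
  by_contra hc
  push Not at hc
  have := mul_pos (Real.exp_pos L.re) hc
  linarith

/-- Hopf's chord theorem for images of compact convex sets: the complement of the set of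
horizontal chord lengths is additive. -/
lemma chord {E : Type*} [NormedAddCommGroup E] [NormedSpace ℝ E]
    {V : Set E} (hV : Convex ℝ V) (hK : IsCompact V) (Λ : E → ℂ) (hΛ : ContinuousOn Λ V)
    (z w : E) (hz : z ∈ V) (hw : w ∈ V) (a b : ℝ) (ha : 0 < a) (hb : 0 < b)
    (hzw : Λ w - Λ z = a + b)
    (hna : ∀ x ∈ V, ∀ y ∈ V, Λ y - Λ x ≠ a) (hnb : ∀ x ∈ V, ∀ y ∈ V, Λ y - Λ x ≠ b) :
    False := by
  have hVV : Convex ℝ (V ×ˢ V) := hV.prod hV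
  have hpre : IsPreconnected V := hV.isPreconnected
  have key : ∀ c : ℝ, 0 < c → (∀ x ∈ V, ∀ y ∈ V, Λ y - Λ x ≠ c) →
      ∃ L : E × E → ℂ, ContinuousOn L (V ×ˢ V) ∧
        (∀ x ∈ V, ∀ y ∈ V, Complex.exp (L (x, y)) = c - (Λ y - Λ x)) ∧
        (∀ x ∈ V, (L (x, x)).im = 0) := by
    intro c hc hn
    have hcont : ContinuousOn (fun p : E × E => (c : ℂ) - (Λ p.2 - Λ p.1)) (V ×ˢ V) := by
      have h2 : ContinuousOn (fun p : E × E => Λ p.2) (V ×ˢ V) :=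
        hΛ.comp continuousOn_snd (fun p hp => hp.2)
      have h1 : ContinuousOn (fun p : E × E => Λ p.1) (V ×ˢ V) :=
        hΛ.comp continuousOn_fst (fun p hp => hp.1)
      exact continuousOn_const.sub (h2.sub h1)
    obtain ⟨L, hL, hL0, hLe⟩ := exists_log_on_convex hVV
      (fun p : E × E => (c : ℂ) - (Λ p.2 - Λ p.1)) hcont
      (fun p hp h => hn p.1 hp.1 p.2 hp.2 (sub_eq_zero.1 h).symm) (z, z) ⟨hz, hz⟩
      (Real.log c : ℂ) (by
        rw [← Complex.ofReal_exp, Real.exp_log hc]; simp)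
    refine ⟨L, hL, fun x hx y hy => hLe (x, y) ⟨hx, hy⟩, ?_⟩
    have hd : ContinuousOn (fun x => (L (x, x)).im) V :=
      Complex.continuous_im.comp_continuousOn
        (hL.comp (by fun_prop : Continuous fun x : E => (x, x)).continuousOn (fun x hx => ⟨hx, hx⟩))
    have hs : ∀ x ∈ V, Complex.exp (L (x, x)) = c := fun x hx => by
      rw [hLe (x, x) ⟨hx, hx⟩]; simp
    have hz0 : (L (z, z)).im = 0 := by rw [hL0]; exact Complex.ofReal_im _
    intro x hx
    have h1 := angle_nonneg hpre _ hd z hz hz0 (fun x hx => sin_im_nonneg (hs x hx) (by simp)) x hx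
    have h2 := angle_nonpos hpre _ hd z hz hz0 (fun x hx => sin_im_nonpos (hs x hx) (by simp)) x hx
    exact le_antisymm h2.2 h1.1
  obtain ⟨A, hAc, hAe, hA0⟩ := key a ha hna
  obtain ⟨B, hBc, hBe, hB0⟩ := key b hb hnb
  have him : ContinuousOn (fun x => (Λ x).im) V := Complex.continuous_im.comp_continuousOn hΛ
  obtain ⟨p, hp, hpmin⟩ := hK.exists_isMinOn ⟨z, hz⟩ him
  obtain ⟨q, hq, hqmax⟩ := hK.exists_isMaxOn ⟨z, hz⟩ him
  have left : ∀ L : E × E → ℂ, ContinuousOn L (V ×ˢ V) → ∀ x ∈ V,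
      ContinuousOn (fun y => (L (x, y)).im) V := fun L hL x hx =>
    Complex.continuous_im.comp_continuousOn
      (hL.comp (by fun_prop : Continuous fun y : E => (x, y)).continuousOn (fun y hy => ⟨hx, hy⟩))
  have right : ∀ L : E × E → ℂ, ContinuousOn L (V ×ˢ V) → ∀ y ∈ V,
      ContinuousOn (fun x => (L (x, y)).im) V := fun L hL y hy =>
    Complex.continuous_im.comp_continuousOn
      (hL.comp (by fun_prop : Continuous fun x : E => (x, y)).continuousOn (fun x hx => ⟨hx, hy⟩))
  have h1 : (A (p, w)).im ≤ 0 := (angle_nonpos hpre _ (left A hAc p hp) p hp (hA0 p hp)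
    (fun y hy => sin_im_nonpos (hAe p hp y hy) (by
      have : (Λ p).im ≤ (Λ y).im := hpmin hy
      simp; linarith)) w hw).2
  have h2 : 0 ≤ (B (z, p)).im := (angle_nonneg hpre _ (right B hBc p hp) p hp (hB0 p hp)
    (fun y hy => sin_im_nonneg (hBe y hy p hp) (by
      have : (Λ p).im ≤ (Λ y).im := hpmin hy
      simp; linarith)) z hz).1
  have h3 : 0 ≤ (A (q, w)).im := (angle_nonneg hpre _ (left A hAc q hq) q hq (hA0 q hq)
    (fun y hy => sin_im_nonneg (hAe q hq y hy) (by
      have : (Λ y).im ≤ (Λ q).im := hqmax hy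
      simp; linarith)) w hw).1
  have h4 : (B (z, q)).im ≤ 0 := (angle_nonpos hpre _ (right B hBc q hq) q hq (hB0 q hq)
    (fun y hy => sin_im_nonpos (hBe y hy q hq) (by
      have : (Λ y).im ≤ (Λ q).im := hqmax hy
      simp; linarith)) z hz).2
  have hD : ContinuousOn (fun x => (A (x, w)).im - (B (z, x)).im) V :=
    (right A hAc w hw).sub (left B hBc z hz)
  obtain ⟨x, hx, hx0⟩ := hpre.intermediate_value hp hq hD (show (0 : ℝ) ∈ Set.Icc _ _ from
      ⟨by linarith, by linarith⟩)
  have e1 : Complex.exp (A (x, w)) = - Complex.exp (B (z, x)) := by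
    rw [hAe x hx w hw, hBe z hz x hx]
    linear_combination -hzw
  have e2 : Complex.exp (A (x, w) - B (z, x)) = -1 := by
    rw [Complex.exp_sub, e1, neg_div, div_self (Complex.exp_ne_zero _)]
  have e3 := congrArg Complex.re e2
  rw [Complex.exp_re] at e3
  simp only [Complex.sub_im] at e3 hx0
  rw [hx0] at e3
  simp at e3
  linarith [Real.exp_pos ((A (x, w)).re - (B (z, x)).re)]

/-- The contradiction for a single map conjugate to a rotation. -/
lemma single_map (g : DiskHomeo) (hg0 : g.toFun 0 = 0) (f : ℂ → ℂ) (τ : ℝ)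
    (hfc : ContinuousOn f Disk)
    (hgf : ∀ x ∈ Disk, g.toFun (f x) = Complex.exp (2 * Real.pi * Complex.I * τ) * g.toFun x)
    (U V W : Set ℂ) (hUD : U ⊆ Disk) (hU0 : (0 : ℂ) ∉ U) (hVU : V ⊆ U) (hWV : W ⊆ V)
    (hU : Convex ℝ U) (hV : Convex ℝ V) (hW : Convex ℝ W) (hWK : IsCompact W)
    (z : ℂ) (hz : z ∈ W) (m : ℕ) (hfV : ∀ x ∈ V, f x ∈ U)
    (hfW : ∀ j ≤ m, ∀ x ∈ W, f^[j] x ∈ V) (hfz : f^[m] z ∈ W)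
    (hm : ∀ p : ℤ, 1 < m * |τ + p|) : False := by
  have hpi : (2 * Real.pi * Complex.I : ℂ) ≠ 0 := Complex.two_pi_I_ne_zero
  have hginj : ∀ x ∈ Disk, ∀ y ∈ Disk, g.toFun x = g.toFun y → x = y := by
    intro x hx y hy h
    rw [← g.left_inv x hx, ← g.left_inv y hy, h]
  have h0D : (0 : ℂ) ∈ Disk := by simp [Disk]
  have hgne : ∀ x ∈ U, g.toFun x ≠ 0 := by
    intro x hx h
    have := hginj x (hUD hx) 0 h0D (by rw [h, hg0])
    exact hU0 (this ▸ hx)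
  have hzU : z ∈ U := hVU (hWV hz)
  obtain ⟨L, hLc, -, hLe⟩ := exists_log_on_convex hU g.toFun (g.cont.mono hUD) hgne z hzU
    (Complex.log (g.toFun z)) (Complex.exp_log (hgne z hzU))
  set Λ : ℂ → ℂ := fun x => L x / (2 * Real.pi * Complex.I) with hΛdef
  have hΛc : ContinuousOn Λ U := hLc.div_const _
  have hΛe : ∀ x ∈ U, Complex.exp (2 * Real.pi * Complex.I * Λ x) = g.toFun x := by
    intro x hx
    rw [← hLe x hx]
    congr 1
    simp only [hΛdef]
    field_simp
  -- equality of lifts up to integers forces equality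
  have hint : ∀ x ∈ U, ∀ y ∈ U, ∀ l : ℤ, Λ y - Λ x = l → l = 0 := by
    intro x hx y hy l h
    have : g.toFun y = g.toFun x := by
      rw [← hΛe x hx, ← hΛe y hy, Complex.exp_eq_exp_iff_exists_int]
      exact ⟨l, by linear_combination (2 * Real.pi * Complex.I) * h⟩
    have := hginj y (hUD hy) x (hUD hx) this
    subst this
    simpa using h.symm
  have hk : ∀ x ∈ V, ∃ k : ℤ, Λ (f x) - Λ x = τ + k := by
    intro x hx
    have h1 := hgf x (hUD (hVU hx))
    rw [← hΛe _ (hfV x hx), ← hΛe _ (hVU hx), ← Complex.exp_add,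
      Complex.exp_eq_exp_iff_exists_int] at h1
    obtain ⟨k, hk⟩ := h1
    refine ⟨k, mul_left_cancel₀ hpi ?_⟩
    linear_combination hk
  choose! k hk using hk
  have hcc : ContinuousOn (fun x => (Λ (f x) - Λ x).re) V :=
    Complex.continuous_re.comp_continuousOn
      ((hΛc.comp (hfc.mono (hVU.trans hUD)) hfV).sub (hΛc.mono hVU))
  have hre : ∀ x ∈ V, (Λ (f x) - Λ x).re = τ + k x := by
    intro x hx
    rw [hk x hx]
    simp
  have hle : ∀ x ∈ V, ∀ y ∈ V, k x ≤ k y := by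
    intro x hx y hy
    by_contra hlt
    push Not at hlt
    have h1 : (k y : ℝ) + 1 ≤ k x := by exact_mod_cast hlt
    obtain ⟨t, ht, ht'⟩ := hV.isPreconnected.intermediate_value hy hx hcc
      (show τ + k y + 1 / 2 ∈ Set.Icc _ _ from by
        rw [hre x hx, hre y hy]; constructor <;> linarith)
    simp only at ht'
    rw [hre t ht] at ht'
    have h2 : (2 * (k t - k y) : ℝ) = 1 := by linarith
    have h3 : 2 * (k t - k y) = 1 := by exact_mod_cast h2
    omega
  obtain ⟨c, hc⟩ : ∃ c : ℝ, c = τ + k z := ⟨_, rfl⟩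
  have hstep : ∀ x ∈ V, Λ (f x) = Λ x + c := by
    intro x hx
    have : k x = k z := le_antisymm (hle x hx z (hWV hz)) (hle z (hWV hz) x hx)
    have h := hk x hx
    rw [this] at h
    rw [hc]; push_cast
    linear_combination h
  have hiter : ∀ j ≤ m, ∀ x ∈ W, Λ (f^[j] x) = Λ x + j * c := by
    intro j
    induction j with
    | zero => intro _ x _; simp
    | succ j ih =>
      intro hj x hx
      rw [Function.iterate_succ_apply', hstep _ (hfW j (by omega) x hx), ih (by omega) x hx]
      push_cast; ring
  have hmc : 1 < |m * c| := by
    rw [abs_mul, Nat.abs_cast, hc]; exact hm _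
  have hfm := hiter m le_rfl
  have hWU : W ⊆ U := hWV.trans hVU
  have hn1 : ∀ x ∈ W, ∀ y ∈ W, Λ y - Λ x ≠ ((1 : ℝ) : ℂ) := by
    intro x hx y hy h
    have := hint x (hWU hx) y (hWU hy) 1 (by rw [h]; simp)
    omega
  rcases lt_abs.1 hmc with hpos | hneg
  · refine chord hW hWK Λ (hΛc.mono hWU) z (f^[m] z) hz hfz 1 (m * c - 1) one_pos (by linarith)
      ?_ hn1 ?_
    · rw [hfm z hz]; push_cast; ring
    · intro x hx y hy h
      have := hint y (hWU hy) (f^[m] x) (hVU (hfW m le_rfl x hx)) 1 (by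
        rw [hfm x hx]; push_cast at h ⊢; linear_combination -h)
      omega
  · refine chord hW hWK Λ (hΛc.mono hWU) (f^[m] z) z hfz hz 1 (-(m * c) - 1) one_pos (by linarith)
      ?_ hn1 ?_
    · rw [hfm z hz]; push_cast; ring
    · intro x hx y hy h
      have := hint (f^[m] y) (hVU (hfW m le_rfl y hy)) x (hWU hx) 1 (by
        rw [hfm y hy]; push_cast at h ⊢; linear_combination -h)
      omega

lemma iterate_mapsTo (h : DiskHomeo) (j : ℕ) : Set.MapsTo h.toFun^[j] Disk Disk :=
  h.mapsTo.iterate j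

lemma iterate_cont (h : DiskHomeo) (j : ℕ) : ContinuousOn h.toFun^[j] Disk :=
  h.cont.iterate h.mapsTo j

lemma iterate_unif (φ : DiskHomeo) (φk : ℕ → DiskHomeo)
    (hconv : TendstoUniformlyOn (fun k => (φk k).toFun) φ.toFun atTop Disk) (j : ℕ) :
    TendstoUniformlyOn (fun k => (φk k).toFun^[j]) φ.toFun^[j] atTop Disk := by
  have huc : UniformContinuousOn φ.toFun Disk :=
    (isCompact_closedBall (0 : ℂ) 1).uniformContinuousOn_of_continuous φ.cont
  induction j with
  | zero =>
    rw [Metric.tendstoUniformlyOn_iff]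
    intro ε hε
    exact Eventually.of_forall fun k x _ => by simpa using hε
  | succ j ih =>
    rw [Metric.tendstoUniformlyOn_iff] at *
    intro ε hε
    obtain ⟨δ, hδ, hd⟩ := Metric.uniformContinuousOn_iff.1 huc (ε / 2) (half_pos hε)
    filter_upwards [ih δ hδ, hconv (ε / 2) (half_pos hε)] with k h1 h2 x hx
    rw [Function.iterate_succ_apply', Function.iterate_succ_apply']
    have a1 := hd _ (iterate_mapsTo φ j hx) _ (iterate_mapsTo (φk k) j hx) (h1 x hx)
    have a2 := h2 _ (iterate_mapsTo (φk k) j hx)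
    linarith [dist_triangle (φ.toFun (φ.toFun^[j] x)) (φ.toFun ((φk k).toFun^[j] x))
      ((φk k).toFun ((φk k).toFun^[j] x))]

lemma local_control (φ : DiskHomeo) (φk : ℕ → DiskHomeo)
    (hconv : TendstoUniformlyOn (fun k => (φk k).toFun) φ.toFun atTop Disk)
    (z : ℂ) (hz : z ∈ Disk) (n : ℕ) (hn : φ.toFun^[n] z = z) (m : ℕ) (ε : ℝ) (hε : 0 < ε) :
    ∃ r > 0, ∀ᶠ k in atTop, ∀ j ≤ m, ∀ x ∈ closedBall z r ∩ Disk,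
      dist (((φk k).toFun^[n])^[j] x) z < ε := by
  have single : ∀ j : ℕ, ∃ r > 0, ∀ᶠ k in atTop, ∀ x ∈ closedBall z r ∩ Disk,
      dist (((φk k).toFun^[n])^[j] x) z < ε := by
    intro j
    have hfix : φ.toFun^[n * j] z = z := by
      rw [Function.iterate_mul]
      exact Function.iterate_fixed hn j
    obtain ⟨δ, hδ, hd⟩ := Metric.continuousOn_iff.1 (iterate_cont φ (n * j)) z hz (ε / 2)
      (half_pos hε)
    refine ⟨δ / 2, half_pos hδ, ?_⟩
    filter_upwards [Metric.tendstoUniformlyOn_iff.1 (iterate_unif φ φk hconv (n * j)) (ε / 2)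
      (half_pos hε)] with k hk x hx
    rw [← Function.iterate_mul]
    have h1 := hd x hx.2 (lt_of_le_of_lt hx.1 (half_lt_self hδ))
    rw [hfix] at h1
    have h2 := hk x hx.2
    rw [dist_comm] at h2
    linarith [dist_triangle ((φk k).toFun^[n * j] x) (φ.toFun^[n * j] x) z]
  induction m with
  | zero =>
    obtain ⟨r, hr, h⟩ := single 0
    refine ⟨r, hr, ?_⟩
    filter_upwards [h] with k hk j hj x hx
    obtain rfl : j = 0 := by omega
    exact hk x hx
  | succ m ih =>
    obtain ⟨r, hr, h⟩ := single (m + 1)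
    obtain ⟨r', hr', h'⟩ := ih
    refine ⟨min r r', lt_min hr hr', ?_⟩
    filter_upwards [h, h'] with k hk hk' j hj x hx
    rcases Nat.lt_or_ge m j with hlt | hge
    · obtain rfl : j = m + 1 := by omega
      exact hk x ⟨closedBall_subset_closedBall (min_le_left _ _) hx.1, hx.2⟩
    · exact hk' j hge x ⟨closedBall_subset_closedBall (min_le_right _ _) hx.1, hx.2⟩

/-- If orientation-preserving homeomorphisms `φ_k` of the disk fixing the origin,
each conjugate (by an orientation-preserving homeomorphism `g_k` fixing the origin)
to the rigid rotation through angle `2πθ_k`, converge uniformly to a homeomorphism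
`φ` fixing the origin, and `θ_k → θ` with `θ` irrational, then `φ` has no periodic
points in `D ∖ {0}`. -/
theorem no_periodic_points_of_limit
    (φ : DiskHomeo) (φk : ℕ → DiskHomeo) (g : ℕ → DiskHomeo)
    (θk : ℕ → ℝ) (θ : ℝ)
    (hφor : OrientationPreserving φ)
    (hφkor : ∀ k, OrientationPreserving (φk k))
    (hφ0 : φ.toFun 0 = 0)
    (hφk0 : ∀ k, (φk k).toFun 0 = 0)
    (hgor : ∀ k, OrientationPreserving (g k))
    (hg0 : ∀ k, (g k).toFun 0 = 0)
    (hconj : ∀ k, ∀ z ∈ Disk,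
      (φk k).toFun z =
        (g k).invFun (Complex.exp ((2 * Real.pi * θk k) * Complex.I) * (g k).toFun z))
    (hθ : Tendsto θk atTop (nhds θ))
    (hirr : Irrational θ)
    (hconv : TendstoUniformlyOn (fun k => (φk k).toFun) φ.toFun atTop Disk) :
    ∀ z ∈ Disk, z ≠ 0 → ∀ n : ℕ, 1 ≤ n → φ.toFun^[n] z ≠ z := by
  intro z hz hz0 n hn hper
  have hpos : 0 < ‖z‖ := norm_pos_iff.2 hz0
  -- distance of `n θ` from the integers
  have hirr' : Irrational ((n : ℝ) * θ) := hirr.natCast_mul (by omega)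
  obtain ⟨δ, hδ, hδp⟩ : ∃ δ > 0, ∀ p : ℤ, δ ≤ |(n : ℝ) * θ + p| := by
    refine ⟨|(n : ℝ) * θ - round ((n : ℝ) * θ)|, ?_, ?_⟩
    · rw [gt_iff_lt, abs_pos, sub_ne_zero]
      exact hirr'.ne_int _
    · intro p
      have := round_le ((n : ℝ) * θ) (-p)
      simpa using this
  obtain ⟨m, hm⟩ := exists_nat_gt (1 / (δ / 2))
  have hδ2 : 0 < δ / 2 := half_pos hδ
  rw [div_lt_iff₀ hδ2] at hm
  have hτ : ∀ᶠ k in atTop, |(n : ℝ) * θk k - n * θ| < δ / 2 := by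
    have := (hθ.const_mul (n : ℝ))
    exact (Metric.tendsto_nhds.1 this) (δ / 2) hδ2
  have hDconv : Convex ℝ Disk := convex_closedBall 0 1
  have hDK : IsCompact Disk := isCompact_closedBall 0 1
  obtain ⟨r₁, hr₁, h₁⟩ := local_control φ φk hconv z hz n hper 1 ‖z‖ hpos
  obtain ⟨r₂, hr₂, h₂⟩ := local_control φ φk hconv z hz n hper m (min r₁ (‖z‖ / 2))
    (lt_min hr₁ (half_pos hpos))
  obtain ⟨r₃, hr₃, h₃⟩ := local_control φ φk hconv z hz n hper m r₂ hr₂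
  obtain ⟨k, hk1, hk2, hk3, hkτ⟩ := (h₁.and (h₂.and (h₃.and hτ))).exists
  have hmaps : ∀ j, ∀ x ∈ Disk, ((φk k).toFun^[n])^[j] x ∈ Disk := fun j x hx =>
    (iterate_mapsTo (φk k) n).iterate j hx
  have hrot : ∀ j : ℕ, ∀ x ∈ Disk, (g k).toFun ((φk k).toFun^[j] x) =
      Complex.exp (2 * Real.pi * Complex.I * ((j * θk k : ℝ) : ℂ)) * (g k).toFun x := by
    intro j
    induction j with
    | zero => intro x _; simp
    | succ j ih =>
      intro x hx
      have hy := iterate_mapsTo (φk k) j hx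
      rw [Function.iterate_succ_apply', hconj k _ hy, (g k).right_inv, ih x hx, ← mul_assoc,
        ← Complex.exp_add]
      · congr 2
        push_cast; ring
      · have hgy := (g k).mapsTo hy
        have hn1 : ‖Complex.exp ((2 * Real.pi * θk k) * Complex.I)‖ = 1 := by
          have := Complex.norm_exp_ofReal_mul_I (2 * Real.pi * θk k)
          push_cast at this
          exact this
        simp only [Disk, mem_closedBall, dist_zero_right] at hgy ⊢
        rw [norm_mul, hn1, one_mul]
        exact hgy
  refine single_map (g k) (hg0 k) ((φk k).toFun^[n]) (n * θk k) (iterate_cont (φk k) n)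
    (hrot n) (ball z ‖z‖ ∩ Disk) (closedBall z (min r₁ (‖z‖ / 2)) ∩ Disk)
    (closedBall z (min r₂ (min r₁ (‖z‖ / 2))) ∩ Disk)
    inter_subset_right ?_ ?_ ?_ ((convex_ball _ _).inter hDconv)
    ((convex_closedBall _ _).inter hDconv) ((convex_closedBall _ _).inter hDconv)
    ((isCompact_closedBall _ _).inter_right hDK.isClosed) z ?_ m ?_ ?_ ?_ ?_
  · rintro ⟨h, -⟩
    simp at h
  · refine inter_subset_inter_left _ (closedBall_subset_ball ?_)
    exact lt_of_le_of_lt (min_le_right _ _) (half_lt_self hpos)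
  · exact inter_subset_inter_left _ (closedBall_subset_closedBall (min_le_right _ _))
  · exact ⟨mem_closedBall_self (by positivity), hz⟩
  · intro x hx
    exact ⟨hk1 1 le_rfl x ⟨closedBall_subset_closedBall (min_le_left _ _) hx.1, hx.2⟩,
      hmaps 1 x hx.2⟩
  · intro j hj x hx
    exact ⟨(hk2 j hj x ⟨closedBall_subset_closedBall (min_le_left _ _) hx.1, hx.2⟩).le,
      hmaps j x hx.2⟩
  · refine ⟨le_min (hk3 m le_rfl z ⟨mem_closedBall_self hr₃.le, hz⟩).le ?_, hmaps m z hz⟩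
    exact (hk2 m le_rfl z ⟨mem_closedBall_self hr₂.le, hz⟩).le
  · intro p
    have h1 : δ / 2 ≤ |n * θk k + p| := by
      have h2 := hδp p
      have h3 := abs_sub_abs_le_abs_sub ((n : ℝ) * θ + p) (n * θk k + p)
      have h4 : |((n : ℝ) * θ + p) - (n * θk k + p)| = |(n : ℝ) * θk k - n * θ| := by
        rw [abs_sub_comm]; congr 1; ring
      linarith
    have h5 : (m : ℝ) * (δ / 2) ≤ m * |n * θk k + p| :=
      mul_le_mul_of_nonneg_left h1 (Nat.cast_nonneg m)
    linarith
end

section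
/- Fix a Hamiltonian H as in the context and a constant c₀ ∈ (0,∞). Then there exists a sequence of constants c_k ∈ (0,∞), k ≥ 1, depending only on H and c₀, with the following property: for every n ≥ 1, every S ≤ 0, every τ₀ ∈ ℝ, and every C^∞ map z : [S,∞)×ℝ → D satisfying z(s,t+n) = z(s,t), the Floer equation ∂_s z + i·(∂_t z − X_H(t+τ₀, z)) = 0, the boundary condition |z(S,t)| = 1 for all t, and the gradient bound |∂_s z| ≤ c₀, |∂_t z| ≤ c₀ everywhere, all partial derivatives of z of total order k+1 are bounded in absolute value by c_k on [S,∞)×ℝ. -/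
open Complex Set MeasureTheory ENNReal Filter

/-- The Hamiltonian vector field `X_H(t,z) = (−∂_y H, ∂_x H)`, written in complex
notation as `i · (∂_x H + i ∂_y H)`. -/
noncomputable def XH (H : ℝ → ℂ → ℝ) (t : ℝ) (w : ℂ) : ℂ :=
  Complex.I * ((fderiv ℝ (H t) w 1 : ℝ) + (fderiv ℝ (H t) w Complex.I : ℝ) * Complex.I)

/-- Admissible Hamiltonians: smooth, 1-periodic in time, constant on the boundary circle. -/
structure IsAdmissible (H : ℝ → ℂ → ℝ) : Prop where
  smooth : ContDiff ℝ (⊤ : ℕ∞) (fun p : ℝ × ℂ => H p.1 p.2)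
  periodic : ∀ (t : ℝ) (z : ℂ), H (t + 1) z = H t z
  bdry_const : ∀ (t : ℝ), ∀ z w : ℂ, ‖z‖ = 1 → ‖w‖ = 1 → H t z = H t w

/-- The half plane `[S,∞) × ℝ`. -/
def HalfPlaneFrom (S : ℝ) : Set (ℝ × ℝ) := Set.Ici S ×ˢ Set.univ

/-- Partial derivative in the `s`-direction, taken within a set `A`. -/
noncomputable def pds {E : Type*} [NormedAddCommGroup E] [NormedSpace ℝ E]
    (A : Set (ℝ × ℝ)) (f : ℝ × ℝ → E) (p : ℝ × ℝ) : E :=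
  fderivWithin ℝ f A p (1, 0)

/-- Partial derivative in the `t`-direction, taken within a set `A`. -/
noncomputable def pdt {E : Type*} [NormedAddCommGroup E] [NormedSpace ℝ E]
    (A : Set (ℝ × ℝ)) (f : ℝ × ℝ → E) (p : ℝ × ℝ) : E :=
  fderivWithin ℝ f A p (0, 1)


/-! ### Calculus on strips `I × ℝ` -/

/-- Good index intervals. -/
structure GoodI (I : Set ℝ) : Prop where
  ud : UniqueDiffOn ℝ I
  cl : I ⊆ closure (interior I)

/-- The strip. -/
abbrev Str (I : Set ℝ) : Set (ℝ × ℝ) := I ×ˢ (Set.univ : Set ℝ)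

section Strip
variable {E : Type*} [NormedAddCommGroup E] [NormedSpace ℝ E]
variable {E' : Type*} [NormedAddCommGroup E'] [NormedSpace ℝ E']
variable {I : Set ℝ}

theorem GoodI.udS (hI : GoodI I) : UniqueDiffOn ℝ (Str I) := hI.ud.prod uniqueDiffOn_univ

theorem GoodI.clS (hI : GoodI I) : Str I ⊆ closure (interior (Str I)) := by
  rw [interior_prod_eq, closure_prod_eq]
  intro p hp
  exact ⟨hI.cl hp.1, by simp⟩

/-- Smooth functions on the strip. -/
def Sm (I : Set ℝ) (f : ℝ × ℝ → E) : Prop := ContDiffOn ℝ (⊤ : ℕ∞) f (Str I)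

theorem Sm.fderivWithin (hI : GoodI I) {f : ℝ × ℝ → E} (hf : Sm I f) :
    ContDiffOn ℝ (⊤ : ℕ∞) (fderivWithin ℝ f (Str I)) (Str I) :=
  ContDiffOn.fderivWithin hf hI.udS (by simp)

theorem Sm.pds (hI : GoodI I) {f : ℝ × ℝ → E} (hf : Sm I f) : Sm I (pds (Str I) f) :=
  (hf.fderivWithin hI).clm_apply contDiffOn_const

theorem Sm.pdt (hI : GoodI I) {f : ℝ × ℝ → E} (hf : Sm I f) : Sm I (pdt (Str I) f) :=
  (hf.fderivWithin hI).clm_apply contDiffOn_const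

theorem Sm.pdt_iter (hI : GoodI I) {f : ℝ × ℝ → E} (hf : Sm I f) (k : ℕ) :
    Sm I ((_root_.pdt (Str I))^[k] f) := by
  induction k with
  | zero => exact hf
  | succ k ih => rw [Function.iterate_succ_apply']; exact ih.pdt hI

theorem Sm.hasF {f : ℝ × ℝ → E} (hf : Sm I f) {p : ℝ × ℝ} (hp : p ∈ Str I) :
    HasFDerivWithinAt f (_root_.fderivWithin ℝ f (Str I) p) (Str I) p :=
  ((hf.differentiableOn (by simp)) p hp).hasFDerivWithinAt

theorem Sm.hasT {f : ℝ × ℝ → E} (hf : Sm I f) {s : ℝ} (hs : s ∈ I) (t : ℝ) :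
    HasDerivAt (fun t => f (s, t)) (_root_.pdt (Str I) f (s, t)) t := by
  have h := hf.hasF (p := (s, t)) ⟨hs, mem_univ _⟩
  have h2 : HasDerivWithinAt (fun t : ℝ => (s, t)) ((0 : ℝ), (1 : ℝ)) univ t :=
    ((hasDerivAt_const t s).prodMk (hasDerivAt_id t)).hasDerivWithinAt
  have h3 := h.comp_hasDerivWithinAt t h2 (fun x _ => mk_mem_prod hs (mem_univ x))
  exact hasDerivWithinAt_univ.1 h3

theorem Sm.hasS {f : ℝ × ℝ → E} (hf : Sm I f) {s : ℝ} (hs : s ∈ I) (t : ℝ) :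
    HasDerivWithinAt (fun s => f (s, t)) (_root_.pds (Str I) f (s, t)) I s := by
  have h := hf.hasF (p := (s, t)) ⟨hs, mem_univ _⟩
  have h2 : HasDerivWithinAt (fun s : ℝ => (s, t)) ((1 : ℝ), (0 : ℝ)) I s :=
    ((hasDerivAt_id s).prodMk (hasDerivAt_const s t)).hasDerivWithinAt
  exact h.comp_hasDerivWithinAt s h2 (fun x hx => mk_mem_prod hx (mem_univ t))

theorem Sm.pdt_eq {f : ℝ × ℝ → E} (hf : Sm I f) {s : ℝ} (hs : s ∈ I) {t : ℝ} {d : E}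
    (h : HasDerivAt (fun t => f (s, t)) d t) : _root_.pdt (Str I) f (s, t) = d :=
  (hf.hasT hs t).unique h

theorem Sm.pds_eq (hI : GoodI I) {f : ℝ × ℝ → E} (hf : Sm I f) {s : ℝ} (hs : s ∈ I) {t : ℝ} {d : E}
    (h : HasDerivWithinAt (fun s => f (s, t)) d I s) : _root_.pds (Str I) f (s, t) = d :=
  (hI.ud s hs).eq_deriv _ (hf.hasS hs t) h

theorem pdt_congr {f g : ℝ × ℝ → E} (h : EqOn f g (Str I)) :
    EqOn (pdt (Str I) f) (pdt (Str I) g) (Str I) := by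
  intro p hp
  simp only [pdt]
  rw [fderivWithin_congr h (h hp)]

theorem pds_congr {f g : ℝ × ℝ → E} (h : EqOn f g (Str I)) :
    EqOn (pds (Str I) f) (pds (Str I) g) (Str I) := by
  intro p hp
  simp only [pds]
  rw [fderivWithin_congr h (h hp)]

theorem pdt_iter_congr {f g : ℝ × ℝ → E} (h : EqOn f g (Str I)) (k : ℕ) :
    EqOn ((pdt (Str I))^[k] f) ((pdt (Str I))^[k] g) (Str I) := by
  induction k with
  | zero => exact h
  | succ k ih => simp only [Function.iterate_succ_apply']; exact pdt_congr ih

theorem pds_pdt (hI : GoodI I) {f : ℝ × ℝ → E} (hf : Sm I f) :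
    EqOn (pds (Str I) (pdt (Str I) f)) (pdt (Str I) (pds (Str I) f)) (Str I) := by
  intro p hp
  have hsym : IsSymmSndFDerivWithinAt ℝ f (Str I) p :=
    ContDiffWithinAt.isSymmSndFDerivWithinAt (hf p hp)
      (by rw [minSmoothness_of_isRCLikeNormedField]; exact WithTop.coe_le_coe.2 (le_top : (2 : ℕ∞) ≤ ⊤)) hI.udS (hI.clS hp) hp
  have hd : DifferentiableWithinAt ℝ (fderivWithin ℝ f (Str I)) (Str I) p :=
    (hf.fderivWithin hI).differentiableOn (by simp) p hp
  have key : ∀ a b : ℝ × ℝ, fderivWithin ℝ (fun q => fderivWithin ℝ f (Str I) q a) (Str I) p b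
      = fderivWithin ℝ (fderivWithin ℝ f (Str I)) (Str I) p b a := by
    intro a b
    rw [fderivWithin_clm_apply (hI.udS p hp) hd (differentiableWithinAt_const _)]
    simp
  have e1 : pds (Str I) (pdt (Str I) f) p =
    fderivWithin ℝ (fun q => fderivWithin ℝ f (Str I) q (0,1)) (Str I) p (1,0) := rfl
  have e2 : pdt (Str I) (pds (Str I) f) p =
    fderivWithin ℝ (fun q => fderivWithin ℝ f (Str I) q (1,0)) (Str I) p (0,1) := rfl
  rw [e1, e2, key, key]
  exact hsym _ _

theorem pds_pdt_iter (hI : GoodI I) {f : ℝ × ℝ → E} (hf : Sm I f) (k : ℕ) :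
    EqOn (pds (Str I) ((pdt (Str I))^[k] f)) ((pdt (Str I))^[k] (pds (Str I) f)) (Str I) := by
  induction k with
  | zero => exact fun _ _ => rfl
  | succ k ih =>
    simp only [Function.iterate_succ_apply']
    exact (pds_pdt hI (hf.pdt_iter hI k)).trans (pdt_congr ih)

theorem pdt_iter_eq (hI : GoodI I) {f : ℝ × ℝ → E} (hf : Sm I f) (k : ℕ) {s : ℝ} (hs : s ∈ I) (t : ℝ) :
    (pdt (Str I))^[k] f (s, t) = iteratedDeriv k (fun t => f (s, t)) t := by
  induction k generalizing t with
  | zero => simp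
  | succ k ih =>
    rw [Function.iterate_succ_apply', iteratedDeriv_succ]
    have : iteratedDeriv k (fun t => f (s, t)) = fun t => (pdt (Str I))^[k] f (s, t) := by
      ext t; exact (ih t).symm
    rw [this]
    exact ((hf.pdt_iter hI k).hasT hs t).deriv.symm

theorem Sm.line {f : ℝ × ℝ → E} (hf : Sm I f) {s : ℝ} (hs : s ∈ I) :
    ContDiff ℝ (⊤ : ℕ∞) (fun t => f (s, t)) := by
  rw [← contDiffOn_univ]
  exact ContDiffOn.comp hf (contDiff_const.prodMk contDiff_id).contDiffOn
    (fun x _ => ⟨hs, mem_univ _⟩)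

theorem pdt_clm (L : E →L[ℝ] E') {f : ℝ × ℝ → E} (hf : Sm I f) :
    EqOn (pdt (Str I) (fun p => L (f p))) (fun p => L (pdt (Str I) f p)) (Str I) := by
  rintro ⟨s, t⟩ ⟨hs, -⟩
  have h : Sm I (fun p => L (f p)) := L.contDiff.comp_contDiffOn hf
  exact h.pdt_eq hs (L.hasFDerivAt.comp_hasDerivAt t (hf.hasT hs t))

theorem pdt_iter_clm (hI : GoodI I) (L : E →L[ℝ] E') {f : ℝ × ℝ → E} (hf : Sm I f) (k : ℕ) :
    EqOn ((pdt (Str I))^[k] (fun p => L (f p))) (fun p => L ((pdt (Str I))^[k] f p)) (Str I) := by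
  induction k with
  | zero => exact fun _ _ => rfl
  | succ k ih =>
    simp only [Function.iterate_succ_apply']
    exact (pdt_congr ih).trans (pdt_clm L (hf.pdt_iter hI k))

theorem pdt_iter_add (hI : GoodI I) {f g : ℝ × ℝ → E} (hf : Sm I f) (hg : Sm I g) (k : ℕ) :
    EqOn ((pdt (Str I))^[k] (fun p => f p + g p))
      (fun p => (pdt (Str I))^[k] f p + (pdt (Str I))^[k] g p) (Str I) := by
  induction k with
  | zero => exact fun _ _ => rfl
  | succ k ih =>
    simp only [Function.iterate_succ_apply']
    refine (pdt_congr ih).trans ?_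
    rintro ⟨s, t⟩ ⟨hs, -⟩
    have h : Sm I (fun p => (pdt (Str I))^[k] f p + (pdt (Str I))^[k] g p) :=
      ContDiffOn.add (hf.pdt_iter hI k) (hg.pdt_iter hI k)
    exact h.pdt_eq hs (((hf.pdt_iter hI k).hasT hs t).add ((hg.pdt_iter hI k).hasT hs t))

/-- boundary vanishing is preserved by tangential derivatives -/
theorem pdt_iter_zero (hI : GoodI I) (L : E →L[ℝ] E') {f : ℝ × ℝ → E} (hf : Sm I f) {s : ℝ}
    (hs : s ∈ I) (h0 : ∀ t, L (f (s, t)) = 0) (k : ℕ) (t : ℝ) :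
    L ((pdt (Str I))^[k] f (s, t)) = 0 := by
  induction k generalizing t with
  | zero => exact h0 t
  | succ k ih =>
    rw [Function.iterate_succ_apply']
    have h1 := L.hasFDerivAt.comp_hasDerivAt t ((hf.pdt_iter hI k).hasT hs t)
    have h2 : (L ∘ fun t => (pdt (Str I))^[k] f (s, t)) = fun _ => 0 := by
      ext t; exact ih t
    rw [h2] at h1
    exact h1.unique (hasDerivAt_const t 0)

end Strip

theorem goodI_Ici (S : ℝ) : GoodI (Ici S) :=
  ⟨uniqueDiffOn_Ici S, by simp⟩

theorem goodI_Ico {a b : ℝ} (h : a < b) : GoodI (Ico a b) :=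
  ⟨uniqueDiffOn_Ico a b, by
    rw [interior_Ico, closure_Ioo h.ne]; exact Ico_subset_Icc_self⟩


/-! ### The second derivative test and the Bernstein estimate -/

open Topology in
theorem second_deriv_nonpos {I : Set ℝ} {φ ψ : ℝ → ℝ} {x d : ℝ} (hr : I ∈ 𝓝[≥] x)
    (hφ : ∀ y ∈ I, HasDerivWithinAt φ (ψ y) I y) (h0 : ψ x = 0)
    (hψ : HasDerivWithinAt ψ d I x) (hmax : IsLocalMaxOn φ I x) : d ≤ 0 := by
  by_contra hd
  push Not at hd
  obtain ⟨e0, he0, hIe⟩ := (mem_nhdsGE_iff_exists_Ico_subset).1 hr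
  have he0 : x < e0 := he0
  -- ψ positive to the right
  have h1 : HasDerivWithinAt ψ d (Ici x) x := hψ.mono_of_mem_nhdsWithin hr
  have h2 : ∀ᶠ y in 𝓝[>] x, 0 < ψ y := by
    have h3 := (hasDerivWithinAt_iff_tendsto_slope' (by simp)).1 h1.Ioi_of_Ici
    have h4 := h3.eventually (lt_mem_nhds hd)
    filter_upwards [h4, self_mem_nhdsWithin] with y hy hxy
    have hxy : x < y := hxy
    rw [slope_def_field, h0, sub_zero] at hy
    by_contra hc
    push Not at hc
    have := div_nonpos_of_nonpos_of_nonneg hc (sub_pos.2 hxy).le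
    linarith
  have h5 : ∀ᶠ y in 𝓝[>] x, φ y ≤ φ x := by
    have : IsLocalMaxOn φ (Ici x) x := by
      have h6 : ∀ᶠ y in 𝓝[I] x, φ y ≤ φ x := hmax
      have h7 : 𝓝[≥] x ≤ 𝓝[I] x := by
        rw [nhdsWithin_le_iff]; exact hr
      exact h7 h6
    exact nhdsWithin_mono x Ioi_subset_Ici_self this
  obtain ⟨e1, he1, hp⟩ := (mem_nhdsGT_iff_exists_Ioo_subset).1 (h2.and h5)
  have he1 : x < e1 := he1
  set y := (x + min e0 e1) / 2 with hy
  have hm : x < min e0 e1 := lt_min he0 he1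
  have hxy : x < y := by rw [hy]; linarith
  have hye : y < min e0 e1 := by rw [hy]; linarith
  have hy0 := hye.trans_le (min_le_left _ _)
  have hy1 := hye.trans_le (min_le_right _ _)
  have hsub : Icc x y ⊆ I := fun w hw => hIe ⟨hw.1, hw.2.trans_lt hy0⟩
  have hmono : StrictMonoOn φ (Icc x y) := by
    apply strictMonoOn_of_deriv_pos (convex_Icc x y)
    · intro w hw
      exact ((hφ w (hsub hw)).continuousWithinAt).mono hsub
    · intro w hw
      rw [interior_Icc] at hw
      have hn : I ∈ 𝓝 w := mem_of_superset (Icc_mem_nhds hw.1 hw.2) hsub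
      rw [((hφ w (hsub ⟨hw.1.le, hw.2.le⟩)).hasDerivAt hn).deriv]
      exact (hp ⟨hw.1, hw.2.trans hy1⟩).1
  have := hmono ⟨le_rfl, hxy.le⟩ ⟨hxy.le, le_rfl⟩ hxy
  have := (hp ⟨hxy, hy1⟩).2
  linarith

/-- real inner product on `ℂ` in coordinates -/
def ip (a b : ℂ) : ℝ := a.re * b.re + a.im * b.im

theorem ip_self (a : ℂ) : ip a a = ‖a‖ ^ 2 := by
  rw [← Complex.normSq_eq_norm_sq, Complex.normSq_apply]; rfl

theorem abs_ip_le (a b : ℂ) : |ip a b| ≤ ‖a‖ * ‖b‖ := by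
  rw [← abs_of_nonneg (by positivity : 0 ≤ ‖a‖ * ‖b‖)]
  apply sq_le_sq.1
  rw [mul_pow, ← ip_self, ← ip_self]
  unfold ip
  nlinarith [sq_nonneg (a.re * b.im - a.im * b.re)]

theorem ip_add (a b c : ℂ) : ip a (b + c) = ip a b + ip a c := by
  simp [ip]; ring

theorem ip_comm (a b : ℂ) : ip a b = ip b a := by
  simp [ip]; ring

theorem HasDerivWithinAt.ip' {I : Set ℝ} {x : ℝ} {f g : ℝ → ℂ} {f' g' : ℂ}
    (hf : HasDerivWithinAt f f' I x) (hg : HasDerivWithinAt g g' I x) :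
    HasDerivWithinAt (fun y => ip (f y) (g y)) (ip f' (g x) + ip (f x) g') I x := by
  have r1 := Complex.reCLM.hasFDerivAt.comp_hasDerivWithinAt x hf
  have r2 := Complex.reCLM.hasFDerivAt.comp_hasDerivWithinAt x hg
  have i1 := Complex.imCLM.hasFDerivAt.comp_hasDerivWithinAt x hf
  have i2 := Complex.imCLM.hasFDerivAt.comp_hasDerivWithinAt x hg
  refine ((r1.mul r2).add (i1.mul i2)).congr_deriv ?_
  simp [ip]; ring

/-- The derivative computation for `χ² |w|² + A |v|²` along a line. -/
theorem line_deriv1 {I : Set ℝ} {x σ e A : ℝ} {v w : ℝ → ℂ} {v1 w1 : ℂ}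
    (hv : HasDerivWithinAt v v1 I x) (hw : HasDerivWithinAt w w1 I x) :
    HasDerivWithinAt (fun y => (e - (y - σ) ^ 2) ^ 2 * ip (w y) (w y) + A * ip (v y) (v y))
      (-4 * (e - (x - σ) ^ 2) * (x - σ) * ip (w x) (w x)
        + 2 * (e - (x - σ) ^ 2) ^ 2 * ip (w x) w1 + 2 * A * ip (v x) v1) I x := by
  have hχ : HasDerivWithinAt (fun y : ℝ => (e - (y - σ) ^ 2) ^ 2)
      (-4 * (e - (x - σ) ^ 2) * (x - σ)) I x := by
    have := (((((hasDerivAt_id x).sub_const σ).pow 2).const_sub e).pow 2).hasDerivWithinAt (s := I)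
    refine this.congr_deriv ?_
    simp; ring
  refine ((hχ.mul (hw.ip' hw)).add ((hv.ip' hv).const_mul A)).congr_deriv ?_
  rw [ip_comm w1, ip_comm v1]; ring

theorem line_deriv2 {I : Set ℝ} {x σ e A : ℝ} {v w v1 w1 : ℝ → ℂ} {v2 w2 : ℂ}
    (hv : HasDerivWithinAt v (v1 x) I x) (hw : HasDerivWithinAt w (w1 x) I x)
    (hv1 : HasDerivWithinAt v1 v2 I x) (hw1 : HasDerivWithinAt w1 w2 I x) :
    HasDerivWithinAt (fun y => -4 * (e - (y - σ) ^ 2) * (y - σ) * ip (w y) (w y)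
        + 2 * (e - (y - σ) ^ 2) ^ 2 * ip (w y) (w1 y) + 2 * A * ip (v y) (v1 y))
      ((8 * (x - σ) ^ 2 - 4 * (e - (x - σ) ^ 2)) * ip (w x) (w x)
        - 16 * (e - (x - σ) ^ 2) * (x - σ) * ip (w x) (w1 x)
        + 2 * (e - (x - σ) ^ 2) ^ 2 * (ip (w1 x) (w1 x) + ip (w x) w2)
        + 2 * A * (ip (v1 x) (v1 x) + ip (v x) v2)) I x := by
  have hid := (hasDerivAt_id x).sub_const σ
  have h0 := (hid.pow 2).const_sub e
  have h1 : HasDerivWithinAt (fun y : ℝ => 2 * (e - (y - σ) ^ 2) ^ 2)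
      (-8 * (e - (x - σ) ^ 2) * (x - σ)) I x := by
    refine ((h0.pow 2).const_mul 2).hasDerivWithinAt.congr_deriv ?_
    simp; ring
  have h2 : HasDerivWithinAt (fun y : ℝ => -4 * (e - (y - σ) ^ 2) * (y - σ))
      (8 * (x - σ) ^ 2 - 4 * (e - (x - σ) ^ 2)) I x := by
    refine ((h0.const_mul (-4)).mul hid).hasDerivWithinAt.congr_deriv ?_
    simp; ring
  refine (((h2.mul (hw.ip' hw)).add (h1.mul (hw.ip' hw1))).add
    ((hv.ip' hv1).const_mul (2 * A))).congr_deriv ?_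
  rw [ip_comm (w1 x) (w x)]; ring

/-- Algebraic core of the Bernstein estimate. -/
theorem bernstein_alg {M A χ ds dt nw nws nwt iws iwt iwL ivL nvs : ℝ}
    (hM : 0 ≤ M) (hA : A = 80 + 2 * M + M ^ 2)
    (hχ0 : 0 ≤ χ) (hχ1 : χ ≤ 1) (hd : ds ^ 2 + dt ^ 2 ≤ 1)
    (hnw : 0 ≤ nw) (hnws : 0 ≤ nws) (hnwt : 0 ≤ nwt)
    (h1 : |iws| ≤ nw * nws) (h2 : |iwt| ≤ nw * nwt)
    (h3 : |iwL| ≤ nw * (M * (1 + nw + nwt))) (h4 : |ivL| ≤ M * (M * (1 + nw)))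
    (key : (8 * ds ^ 2 - 4 * χ) * nw ^ 2 + (8 * dt ^ 2 - 4 * χ) * nw ^ 2
      - 16 * χ * ds * iws - 16 * χ * dt * iwt
      + 2 * χ ^ 2 * (nws ^ 2 + nwt ^ 2 + iwL)
      + 2 * A * (nvs ^ 2 + nw ^ 2 + ivL) ≤ 0) :
    nw ^ 2 ≤ M ^ 2 + 2 * A * M ^ 2 + A * M ^ 4 := by
  have hA0 : 0 < A := by rw [hA]; positivity
  obtain ⟨h1a, h1b⟩ := abs_le.1 h1
  obtain ⟨h2a, h2b⟩ := abs_le.1 h2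
  obtain ⟨h3a, h3b⟩ := abs_le.1 h3
  obtain ⟨h4a, h4b⟩ := abs_le.1 h4
  have e1 : 16 * χ * ds * iws ≤ χ ^ 2 * nws ^ 2 + 64 * ds ^ 2 * nw ^ 2 := by
    have h : |ds * iws| ≤ |ds| * (nw * nws) := by
      rw [abs_mul]; exact mul_le_mul_of_nonneg_left h1 (abs_nonneg _)
    have h' := (le_abs_self _).trans h
    have : ds ^ 2 = |ds| ^ 2 := (sq_abs ds).symm
    rw [this]
    have b1 := sq_nonneg (χ * nws - 8 * (|ds| * nw))
    have b2 := mul_le_mul_of_nonneg_left h' hχ0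
    linarith
  have e2 : 16 * χ * dt * iwt ≤ χ ^ 2 * nwt ^ 2 + 64 * dt ^ 2 * nw ^ 2 := by
    have h : |dt * iwt| ≤ |dt| * (nw * nwt) := by
      rw [abs_mul]; exact mul_le_mul_of_nonneg_left h2 (abs_nonneg _)
    have h' := (le_abs_self _).trans h
    have : dt ^ 2 = |dt| ^ 2 := (sq_abs dt).symm
    rw [this]
    have b1 := sq_nonneg (χ * nwt - 8 * (|dt| * nw))
    have b2 := mul_le_mul_of_nonneg_left h' hχ0
    linarith
  have hχ2 : χ ^ 2 ≤ 1 := pow_le_one₀ hχ0 hχ1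
  have e3 : -(2 * χ ^ 2 * iwL) ≤ χ ^ 2 * nwt ^ 2 + (1 + 2 * M + M ^ 2) * nw ^ 2 + M ^ 2 := by
    have a1 : -(2 * χ ^ 2 * iwL) ≤ 2 * χ ^ 2 * (nw * (M * (1 + nw + nwt))) := by
      have := mul_le_mul_of_nonneg_left h3a (sq_nonneg χ)
      linarith
    have a2 : 2 * (nw * (M * (1 + nw + nwt))) ≤
        nwt ^ 2 + (1 + 2 * M + M ^ 2) * nw ^ 2 + M ^ 2 := by
      have b1 := sq_nonneg (nwt - M * nw)
      have b2 := sq_nonneg (nw - M)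
      linarith
    have a3 : χ ^ 2 * ((1 + 2 * M + M ^ 2) * nw ^ 2 + M ^ 2) ≤
        (1 + 2 * M + M ^ 2) * nw ^ 2 + M ^ 2 :=
      mul_le_of_le_one_left (by positivity) hχ2
    have a4 := mul_le_mul_of_nonneg_left a2 (sq_nonneg χ)
    linarith
  have e4 : -(2 * A * ivL) ≤ 2 * A * M ^ 2 + A * (nw ^ 2 + M ^ 4) := by
    have a1 : -(2 * ivL) ≤ 2 * M ^ 2 + nw ^ 2 + M ^ 4 := by
      have := sq_nonneg (nw - M ^ 2)
      linarith
    have := mul_le_mul_of_nonneg_left a1 hA0.le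
    linarith
  have e5 : (64 * ds ^ 2 + 64 * dt ^ 2) * nw ^ 2 ≤ 64 * nw ^ 2 := by
    have := mul_le_mul_of_nonneg_right hd (sq_nonneg nw)
    linarith
  have e6 : 8 * χ * nw ^ 2 ≤ 8 * nw ^ 2 := by
    have := mul_le_mul_of_nonneg_right hχ1 (sq_nonneg nw)
    linarith
  have e7 : 0 ≤ (8 * ds ^ 2 + 8 * dt ^ 2) * nw ^ 2 := by positivity
  have e8 : 0 ≤ 2 * A * nvs ^ 2 := by positivity
  have e9 : 0 ≤ χ ^ 2 * nws ^ 2 := by positivity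
  have : (A - 73 - 2 * M - M ^ 2) * nw ^ 2 ≤ M ^ 2 + 2 * A * M ^ 2 + A * M ^ 4 := by
    linarith
  have h7 : A - 73 - 2 * M - M ^ 2 = 7 := by rw [hA]; ring
  rw [h7] at this
  have := sq_nonneg nw
  linarith

open Topology in
/-- Bernstein estimate on a (half) disc. -/
theorem bernstein_disc {I : Set ℝ} (hI : GoodI I) {v : ℝ × ℝ → ℂ} (hv : Sm I v) {σ τ R M : ℝ}
    (hM : 0 ≤ M) (hR : 0 < R) (hR1 : R ≤ 1)
    (hright : ∀ s ∈ I, I ∈ 𝓝[≥] s)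
    (hK : IsClosed (I ∩ Icc (σ - R) (σ + R)))
    (hbd : ∀ p ∈ Str I, (p.1 - σ) ^ 2 + (p.2 - τ) ^ 2 ≤ R ^ 2 → I ∈ 𝓝 p.1 ∨
      (p.1 = σ ∧ ip (v p) (pds (Str I) v p) = 0 ∧
        ip (pdt (Str I) v p) (pds (Str I) (pdt (Str I) v) p) = 0))
    (hvM : ∀ p ∈ Str I, (p.1 - σ) ^ 2 + (p.2 - τ) ^ 2 ≤ R ^ 2 → ‖v p‖ ≤ M)
    (hL1 : ∀ p ∈ Str I, (p.1 - σ) ^ 2 + (p.2 - τ) ^ 2 ≤ R ^ 2 →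
      ‖pds (Str I) (pds (Str I) v) p + pdt (Str I) (pdt (Str I) v) p‖ ≤
        M * (1 + ‖pdt (Str I) v p‖))
    (hL2 : ∀ p ∈ Str I, (p.1 - σ) ^ 2 + (p.2 - τ) ^ 2 ≤ R ^ 2 →
      ‖pds (Str I) (pds (Str I) (pdt (Str I) v)) p + pdt (Str I) (pdt (Str I) (pdt (Str I) v)) p‖ ≤
        M * (1 + ‖pdt (Str I) v p‖ + ‖pdt (Str I) (pdt (Str I) v) p‖))
    {p : ℝ × ℝ} (hp : p ∈ Str I) (hpR : (p.1 - σ) ^ 2 + (p.2 - τ) ^ 2 ≤ R ^ 2 / 4) :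
    (3 / 4 * R ^ 2) ^ 2 * ‖pdt (Str I) v p‖ ^ 2 ≤ M ^ 2 + 2 * (80 + 2 * M + M ^ 2) * M ^ 2 +
      (80 + 2 * M + M ^ 2) * M ^ 4 + (80 + 2 * M + M ^ 2) * M ^ 2 := by
  set w := pdt (Str I) v with hw
  set A := 80 + 2 * M + M ^ 2 with hA
  have hA0 : 0 < A := by rw [hA]; positivity
  have hws : Sm I w := hv.pdt hI
  set χ : ℝ × ℝ → ℝ := fun q => R ^ 2 - ((q.1 - σ) ^ 2 + (q.2 - τ) ^ 2) with hχ
  set P : ℝ × ℝ → ℝ := fun q => (χ q) ^ 2 * ip (w q) (w q) + A * ip (v q) (v q) with hP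
  set K : Set (ℝ × ℝ) := Str I ∩ {q | 0 ≤ χ q} with hKdef
  have hχc : Continuous χ := by rw [hχ]; fun_prop
  have hRR : R ^ 2 ≤ 1 := pow_le_one₀ hR.le hR1
  have hKsub : K ⊆ (I ∩ Icc (σ - R) (σ + R)) ×ˢ Icc (τ - R) (τ + R) := by
    rintro ⟨a, b⟩ ⟨⟨ha, -⟩, hc⟩
    have hc : 0 ≤ R ^ 2 - ((a - σ) ^ 2 + (b - τ) ^ 2) := hc
    have h1 := abs_le.1 (abs_le_of_sq_le_sq (by nlinarith : (a - σ) ^ 2 ≤ R ^ 2) hR.le)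
    have h2 := abs_le.1 (abs_le_of_sq_le_sq (by nlinarith : (b - τ) ^ 2 ≤ R ^ 2) hR.le)
    exact ⟨⟨ha, by linarith, by linarith⟩, by linarith, by linarith⟩
  have hKc : IsCompact K := by
    have h1 : IsCompact ((I ∩ Icc (σ - R) (σ + R)) ×ˢ Icc (τ - R) (τ + R)) :=
      (isCompact_Icc.of_isClosed_subset hK inter_subset_right).prod isCompact_Icc
    have h2 : K = ((I ∩ Icc (σ - R) (σ + R)) ×ˢ Icc (τ - R) (τ + R)) ∩ {q | 0 ≤ χ q} := by
      apply Subset.antisymm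
      · exact fun q hq => ⟨hKsub hq, hq.2⟩
      · exact fun q hq => ⟨⟨hq.1.1.1, mem_univ _⟩, hq.2⟩
    rw [h2]
    exact h1.inter_right (isClosed_le continuous_const hχc)
  have hPc : ContinuousOn P K := by
    have c1 : ContinuousOn v K := hv.continuousOn.mono inter_subset_left
    have c2 : ContinuousOn w K := hws.continuousOn.mono inter_subset_left
    have : ∀ f : ℝ × ℝ → ℂ, ContinuousOn f K → ContinuousOn (fun q => ip (f q) (f q)) K := by
      intro f hf
      simp only [ip_self]
      exact hf.norm.pow 2
    exact ((hχc.continuousOn.pow 2).mul (this w c2)).add (continuousOn_const.mul (this v c1))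
  have hpK : p ∈ K := ⟨hp, by
    show 0 ≤ R ^ 2 - ((p.1 - σ) ^ 2 + (p.2 - τ) ^ 2)
    nlinarith⟩
  obtain ⟨p0, hp0, hmax⟩ := hKc.exists_isMaxOn ⟨p, hpK⟩ hPc
  have hdist : ∀ q ∈ K, (q.1 - σ) ^ 2 + (q.2 - τ) ^ 2 ≤ R ^ 2 := by
    intro q hq
    have : 0 ≤ R ^ 2 - ((q.1 - σ) ^ 2 + (q.2 - τ) ^ 2) := hq.2
    linarith
  have hχ1 : ∀ q ∈ K, χ q ≤ 1 := by
    intro q hq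
    show R ^ 2 - ((q.1 - σ) ^ 2 + (q.2 - τ) ^ 2) ≤ 1
    nlinarith [sq_nonneg (q.1 - σ), sq_nonneg (q.2 - τ)]
  have hvp0 := hvM p0 hp0.1 (hdist p0 hp0)
  -- the bound at the maximum
  have hPmax : P p0 ≤ M ^ 2 + 2 * A * M ^ 2 + A * M ^ 4 + A * M ^ 2 := by
    have hv2 : A * ip (v p0) (v p0) ≤ A * M ^ 2 := by
      rw [ip_self]; gcongr
    suffices h : (χ p0) ^ 2 * ip (w p0) (w p0) ≤ M ^ 2 + 2 * A * M ^ 2 + A * M ^ 4 by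
      show (χ p0) ^ 2 * ip (w p0) (w p0) + A * ip (v p0) (v p0) ≤ _
      linarith
    rcases eq_or_lt_of_le (show 0 ≤ χ p0 from hp0.2) with h0 | hpos
    · rw [← h0]; simp; positivity
    have hloc : IsLocalMaxOn P (Str I) p0 := by
      have h1 : {q | 0 < χ q} ∈ 𝓝 p0 := (isOpen_lt continuous_const hχc).mem_nhds hpos
      filter_upwards [mem_nhdsWithin_of_mem_nhds h1, self_mem_nhdsWithin] with q hq hqI
      exact hmax ⟨hqI, le_of_lt hq⟩
    obtain ⟨s0, t0⟩ := p0
    have hs0 : s0 ∈ I := hp0.1.1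
    -- t-line
    have ht : (8 * (t0 - τ) ^ 2 - 4 * χ (s0, t0)) * ip (w (s0, t0)) (w (s0, t0))
        - 16 * χ (s0, t0) * (t0 - τ) * ip (w (s0, t0)) (pdt (Str I) w (s0, t0))
        + 2 * χ (s0, t0) ^ 2 * (ip (pdt (Str I) w (s0, t0)) (pdt (Str I) w (s0, t0))
          + ip (w (s0, t0)) (pdt (Str I) (pdt (Str I) w) (s0, t0)))
        + 2 * A * (ip (w (s0, t0)) (w (s0, t0))
          + ip (v (s0, t0)) (pdt (Str I) w (s0, t0))) ≤ 0 := by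
      set e := R ^ 2 - (s0 - σ) ^ 2 with he
      have hχe : ∀ t, χ (s0, t) = e - (t - τ) ^ 2 := fun t => by
        show R ^ 2 - ((s0 - σ) ^ 2 + (t - τ) ^ 2) = _
        rw [he]; ring
      have hline : IsLocalMaxOn (fun t => P (s0, t)) univ t0 := by
        have hc : Tendsto (fun t : ℝ => (s0, t)) (𝓝[univ] t0) (𝓝[Str I] (s0, t0)) := by
          apply tendsto_nhdsWithin_of_tendsto_nhds_of_eventually_within
          · exact ((continuous_const.prodMk continuous_id).tendsto t0).mono_left nhdsWithin_le_nhds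
          · exact Eventually.of_forall fun t => ⟨hs0, mem_univ _⟩
        exact hc.eventually hloc
      have hPline : (fun t => P (s0, t)) = fun t => (e - (t - τ) ^ 2) ^ 2 *
          ip (w (s0, t)) (w (s0, t)) + A * ip (v (s0, t)) (v (s0, t)) := by
        ext t; rw [← hχe]
      rw [hPline] at hline
      have d1 : ∀ t, HasDerivWithinAt _ _ univ t := fun t =>
        line_deriv1 (I := univ) (σ := τ) (e := e) (A := A)
          (hv.hasT hs0 t).hasDerivWithinAt (hws.hasT hs0 t).hasDerivWithinAt
      have d2 := line_deriv2 (I := univ) (σ := τ) (e := e) (A := A) (x := t0)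
          (v1 := fun t => pdt (Str I) v (s0, t)) (w1 := fun t => pdt (Str I) w (s0, t))
          (hv.hasT hs0 t0).hasDerivWithinAt (hws.hasT hs0 t0).hasDerivWithinAt
          (hws.hasT hs0 t0).hasDerivWithinAt ((hws.pdt hI).hasT hs0 t0).hasDerivWithinAt
      have hz := IsLocalMax.hasDerivAt_eq_zero
        (by simpa [IsLocalMaxOn, IsLocalMax] using hline) ((d1 t0).hasDerivAt univ_mem)
      have := second_deriv_nonpos univ_mem (fun t _ => d1 t) hz d2 hline
      rw [← hχe] at this
      exact this
    have hs : (8 * (s0 - σ) ^ 2 - 4 * χ (s0, t0)) * ip (w (s0, t0)) (w (s0, t0))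
        - 16 * χ (s0, t0) * (s0 - σ) * ip (w (s0, t0)) (pds (Str I) w (s0, t0))
        + 2 * χ (s0, t0) ^ 2 * (ip (pds (Str I) w (s0, t0)) (pds (Str I) w (s0, t0))
          + ip (w (s0, t0)) (pds (Str I) (pds (Str I) w) (s0, t0)))
        + 2 * A * (ip (pds (Str I) v (s0, t0)) (pds (Str I) v (s0, t0))
          + ip (v (s0, t0)) (pds (Str I) (pds (Str I) v) (s0, t0))) ≤ 0 := by
      set e := R ^ 2 - (t0 - τ) ^ 2 with he
      have hχe : ∀ s, χ (s, t0) = e - (s - σ) ^ 2 := fun s => by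
        show R ^ 2 - ((s - σ) ^ 2 + (t0 - τ) ^ 2) = _
        rw [he]; ring
      have hline : IsLocalMaxOn (fun s => P (s, t0)) I s0 := by
        have hc : Tendsto (fun s : ℝ => (s, t0)) (𝓝[I] s0) (𝓝[Str I] (s0, t0)) := by
          apply tendsto_nhdsWithin_of_tendsto_nhds_of_eventually_within
          · exact ((continuous_id.prodMk continuous_const).tendsto s0).mono_left nhdsWithin_le_nhds
          · filter_upwards [self_mem_nhdsWithin] with s hs using ⟨hs, mem_univ _⟩
        exact hc.eventually hloc
      have hPline : (fun s => P (s, t0)) = fun s => (e - (s - σ) ^ 2) ^ 2 *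
          ip (w (s, t0)) (w (s, t0)) + A * ip (v (s, t0)) (v (s, t0)) := by
        ext s; rw [← hχe]
      rw [hPline] at hline
      have d1 : ∀ s ∈ I, HasDerivWithinAt _ _ I s := fun s hs =>
        line_deriv1 (I := I) (σ := σ) (e := e) (A := A) (hv.hasS hs t0) (hws.hasS hs t0)
      have d2 := line_deriv2 (I := I) (σ := σ) (e := e) (A := A) (x := s0)
          (v1 := fun s => pds (Str I) v (s, t0)) (w1 := fun s => pds (Str I) w (s, t0))
          (hv.hasS hs0 t0) (hws.hasS hs0 t0) ((hv.pds hI).hasS hs0 t0) ((hws.pds hI).hasS hs0 t0)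
      have hz : -4 * (e - (s0 - σ) ^ 2) * (s0 - σ) * ip (w (s0, t0)) (w (s0, t0))
        + 2 * (e - (s0 - σ) ^ 2) ^ 2 * ip (w (s0, t0)) (pds (Str I) w (s0, t0))
        + 2 * A * ip (v (s0, t0)) (pds (Str I) v (s0, t0)) = 0 := by
        rcases hbd (s0, t0) hp0.1 (hdist _ hp0) with hn | ⟨h1, h2, h3⟩
        · exact IsLocalMax.hasDerivAt_eq_zero (hline.isLocalMax hn) ((d1 s0 hs0).hasDerivAt hn)
        · have h1 : s0 = σ := h1
          rw [h2, h3, h1]; ring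
      have := second_deriv_nonpos (hright s0 hs0) d1 hz d2 hline
      rw [← hχe] at this
      exact this
    have l1 := hL1 _ hp0.1 (hdist _ hp0)
    have l2 := hL2 _ hp0.1 (hdist _ hp0)
    have hb := bernstein_alg (M := M) (A := A) (χ := χ (s0, t0)) (ds := s0 - σ) (dt := t0 - τ)
      (nw := ‖w (s0, t0)‖) (nws := ‖pds (Str I) w (s0, t0)‖) (nwt := ‖pdt (Str I) w (s0, t0)‖)
      (iws := ip (w (s0, t0)) (pds (Str I) w (s0, t0)))
      (iwt := ip (w (s0, t0)) (pdt (Str I) w (s0, t0)))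
      (iwL := ip (w (s0, t0)) (pds (Str I) (pds (Str I) w) (s0, t0)
        + pdt (Str I) (pdt (Str I) w) (s0, t0)))
      (ivL := ip (v (s0, t0)) (pds (Str I) (pds (Str I) v) (s0, t0) + pdt (Str I) w (s0, t0)))
      (nvs := ‖pds (Str I) v (s0, t0)‖) hM hA hp0.2 (hχ1 _ hp0)
      ((hdist _ hp0).trans hRR) (norm_nonneg _) (norm_nonneg _) (norm_nonneg _)
      (abs_ip_le _ _) (abs_ip_le _ _)
      ((abs_ip_le _ _).trans (mul_le_mul_of_nonneg_left l2 (norm_nonneg _)))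
      ((abs_ip_le _ _).trans (mul_le_mul hvp0 l1 (norm_nonneg _) hM))
      (by
        rw [ip_add, ip_add]
        simp only [← ip_self]
        linarith)
    rw [ip_self]
    have h1 : χ (s0, t0) ^ 2 ≤ 1 := by
      exact pow_le_one₀ hp0.2 (hχ1 _ hp0)
    calc χ (s0, t0) ^ 2 * ‖w (s0, t0)‖ ^ 2 ≤ 1 * ‖w (s0, t0)‖ ^ 2 := by gcongr
      _ ≤ _ := by rw [one_mul]; exact hb
  have hfin : P p ≤ P p0 := hmax hpK
  have h1 : (3 / 4 * R ^ 2) ^ 2 * ‖w p‖ ^ 2 ≤ P p := by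
    show _ ≤ (χ p) ^ 2 * ip (w p) (w p) + A * ip (v p) (v p)
    rw [ip_self, ip_self]
    have : 3 / 4 * R ^ 2 ≤ χ p := by
      show _ ≤ R ^ 2 - ((p.1 - σ) ^ 2 + (p.2 - τ) ^ 2)
      linarith
    have h2 : 0 ≤ A * ‖v p‖ ^ 2 := by positivity
    have h3 : (3 / 4 * R ^ 2) ^ 2 * ‖w p‖ ^ 2 ≤ (χ p) ^ 2 * ‖w p‖ ^ 2 := by gcongr
    linarith
  linarith


/-! ### Periodic smooth functions and one-dimensional chain/Leibniz bounds -/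

/-- Smooth functions of `(τ, w)` which are 1-periodic in `τ`. -/
structure Per {E : Type*} [NormedAddCommGroup E] [NormedSpace ℝ E] (G : ℝ × ℂ → E) : Prop where
  sm : ContDiff ℝ (⊤ : ℕ∞) G
  per : ∀ τ w, G (τ + 1, w) = G (τ, w)

theorem nat_le_smooth (n : ℕ) : (n : WithTop ℕ∞) ≤ ((⊤ : ℕ∞) : WithTop ℕ∞) := by
  exact_mod_cast le_top

section PerSec
variable {E : Type*} [NormedAddCommGroup E] [NormedSpace ℝ E]

theorem Per.periodic_iter {G : ℝ × ℂ → E} (hG : Per G) (i : ℕ) (w : ℂ) :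
    Function.Periodic (fun τ => iteratedFDeriv ℝ i G (τ, w)) 1 := by
  intro τ
  have h : (fun p : ℝ × ℂ => G (p + (1, 0))) = G := by
    ext ⟨a, b⟩
    simpa using hG.per a b
  have h2 := iteratedFDeriv_comp_add_right (𝕜 := ℝ) (f := G) i (1, 0) (τ, w)
  rw [h] at h2
  simpa using h2.symm

theorem Per.bound {G : ℝ × ℂ → E} (hG : Per G) (i : ℕ) :
    ∃ C, 0 ≤ C ∧ ∀ τ w, ‖w‖ ≤ 1 → ‖iteratedFDeriv ℝ i G (τ, w)‖ ≤ C := by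
  have hc : Continuous (iteratedFDeriv ℝ i G) := hG.sm.continuous_iteratedFDeriv (by
    exact_mod_cast le_top)
  obtain ⟨C, hC⟩ := ((isCompact_Icc (a := (0 : ℝ)) (b := 1)).prod
    (isCompact_closedBall (0 : ℂ) 1)).exists_bound_of_continuousOn hc.continuousOn
  refine ⟨max C 0, le_max_right _ _, fun τ w hw => ?_⟩
  obtain ⟨y, hy, hfy⟩ := (hG.periodic_iter i w).exists_mem_Ico₀ one_pos τ
  have hfy : iteratedFDeriv ℝ i G (τ, w) = iteratedFDeriv ℝ i G (y, w) := hfy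
  rw [hfy]
  exact (hC (y, w) ⟨⟨hy.1, hy.2.le⟩, by simpa using hw⟩).trans (le_max_left _ _)

theorem Per.bound_le {G : ℝ × ℂ → E} (hG : Per G) (k : ℕ) :
    ∃ C, 0 ≤ C ∧ ∀ i ≤ k, ∀ τ w, ‖w‖ ≤ 1 → ‖iteratedFDeriv ℝ i G (τ, w)‖ ≤ C := by
  choose C hC0 hC using fun i => hG.bound i
  refine ⟨∑ i ∈ Finset.range (k + 1), C i, Finset.sum_nonneg fun i _ => hC0 i,
    fun i hi τ w hw => (hC i τ w hw).trans ?_⟩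
  exact Finset.single_le_sum (f := C) (fun i _ => hC0 i) (by simp; omega)

theorem Per.fderiv {G : ℝ × ℂ → E} (hG : Per G) : Per (fderiv ℝ G) where
  sm := hG.sm.fderiv_right (by simp)
  per τ w := by
    have h : (fun p : ℝ × ℂ => G (p + (1, 0))) = G := by
      ext ⟨a, b⟩
      simpa using hG.per a b
    have h2 := fderiv_comp_add_right (𝕜 := ℝ) (f := G) (x := (τ, w)) (1, 0)
    rw [h] at h2
    simpa using h2.symm

/-- derivatives of the curve `t ↦ (t + τ₀, y t)` -/
theorem curve_bound {y : ℝ → ℂ} (hy : ContDiff ℝ (⊤ : ℕ∞) y) (τ₀ t : ℝ) {M : ℝ} (i : ℕ) (hi : 1 ≤ i)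
    (h : ‖iteratedDeriv i y t‖ ≤ M) :
    ‖iteratedFDeriv ℝ i (fun t => (t + τ₀, y t)) t‖ ≤ max 1 M := by
  have h1 : ContDiff ℝ (⊤ : ℕ∞) (fun t : ℝ => t + τ₀) := contDiff_id.add contDiff_const
  rw [iteratedFDeriv_prodMk (n := (⊤ : ℕ∞)) h1.contDiffAt hy.contDiffAt (by exact_mod_cast le_top)]
  rw [ContinuousMultilinearMap.opNorm_prod]
  refine max_le_max ?_ ?_
  · rw [norm_iteratedFDeriv_eq_norm_iteratedDeriv]
    obtain ⟨j, rfl⟩ : ∃ j, i = j + 1 := ⟨i - 1, by omega⟩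
    rw [iteratedDeriv_succ']
    have : deriv (fun t : ℝ => t + τ₀) = fun _ => 1 := by
      ext t; simp
    rw [this, iteratedDeriv_const]
    split_ifs <;> simp
  · rw [norm_iteratedFDeriv_eq_norm_iteratedDeriv]; exact h

theorem Per.comp_bound {G : ℝ × ℂ → E} (hG : Per G) (k : ℕ) (M : ℝ) :
    ∃ C, 0 ≤ C ∧ ∀ (y : ℝ → ℂ) (τ₀ t : ℝ), ContDiff ℝ (⊤ : ℕ∞) y → ‖y t‖ ≤ 1 →
      (∀ j, 1 ≤ j → j ≤ k → ‖iteratedDeriv j y t‖ ≤ M) →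
      ∀ i ≤ k, ‖iteratedDeriv i (fun t => G (t + τ₀, y t)) t‖ ≤ C := by
  obtain ⟨B, hB0, hB⟩ := hG.bound_le k
  refine ⟨k.factorial * B * (max 1 M) ^ k, by positivity, fun y τ₀ t hy hyt hj i hi => ?_⟩
  have hc : ContDiff ℝ (⊤ : ℕ∞) (fun t : ℝ => (t + τ₀, y t)) :=
    (contDiff_id.add contDiff_const).prodMk hy
  have := norm_iteratedFDeriv_comp_le (𝕜 := ℝ) (n := i) (N := (⊤ : ℕ∞)) (D := max 1 M) (C := B) hG.sm hc
    (by exact_mod_cast le_top) t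
    (fun a ha => hB a (ha.trans hi) _ _ hyt)
    (fun a ha1 ha => by
      refine (curve_bound hy τ₀ t a ha1 (hj a ha1 (ha.trans hi))).trans ?_
      exact le_self_pow₀ (le_max_left _ _) (by omega))
  rw [norm_iteratedFDeriv_eq_norm_iteratedDeriv] at this
  refine this.trans ?_
  have h1 : (1 : ℝ) ≤ max 1 M := le_max_left _ _
  have h2 : (i.factorial : ℝ) ≤ k.factorial := by exact_mod_cast Nat.factorial_le hi
  gcongr

theorem leib {F : Type*} [NormedAddCommGroup F] [NormedSpace ℝ F] {B : ℝ → F →L[ℝ] E} {g : ℝ → F}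
    (hB : ContDiff ℝ (⊤ : ℕ∞) B) (hg : ContDiff ℝ (⊤ : ℕ∞) g) (n : ℕ) (t : ℝ) :
    ‖iteratedDeriv n (fun t => B t (g t)) t‖ ≤ ∑ i ∈ Finset.range (n + 1),
      (n.choose i) * ‖iteratedDeriv i B t‖ * ‖iteratedDeriv (n - i) g t‖ := by
  have := norm_iteratedFDeriv_clm_apply (𝕜 := ℝ) (n := n) hB hg t (by exact_mod_cast le_top)
  simpa only [norm_iteratedFDeriv_eq_norm_iteratedDeriv] using this

/-- If every term is bounded by `Q`, then the Leibniz sum is bounded by `2^n Q`. -/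
theorem leib_le {F : Type*} [NormedAddCommGroup F] [NormedSpace ℝ F] {B : ℝ → F →L[ℝ] E} {g : ℝ → F}
    (hB : ContDiff ℝ (⊤ : ℕ∞) B) (hg : ContDiff ℝ (⊤ : ℕ∞) g) (n : ℕ) (t : ℝ) {Q : ℝ}
    (h : ∀ i ≤ n, ‖iteratedDeriv i B t‖ * ‖iteratedDeriv (n - i) g t‖ ≤ Q) :
    ‖iteratedDeriv n (fun t => B t (g t)) t‖ ≤ 2 ^ n * Q := by
  refine (leib hB hg n t).trans ?_
  have h1 : (2 : ℝ) ^ n = ∑ i ∈ Finset.range (n + 1), (n.choose i : ℝ) := by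
    exact_mod_cast (Nat.sum_range_choose n).symm
  rw [h1, Finset.sum_mul]
  apply Finset.sum_le_sum
  intro i hi
  rw [mul_assoc]
  exact mul_le_mul_of_nonneg_left (h i (by simp at hi; omega)) (by positivity)

/-- linear dependence on the top order derivative -/
theorem Per.comp_bound_top {G : ℝ × ℂ → E} (hG : Per G) (k : ℕ) (M : ℝ) (hM : 0 ≤ M) :
    ∃ C, 0 ≤ C ∧ ∀ (y : ℝ → ℂ) (τ₀ t : ℝ), ContDiff ℝ (⊤ : ℕ∞) y → ‖y t‖ ≤ 1 →
      (∀ j, 1 ≤ j → j ≤ k → ‖iteratedDeriv j y t‖ ≤ M) →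
      ‖iteratedDeriv (k + 1) (fun t => G (t + τ₀, y t)) t‖ ≤ C * (1 + ‖iteratedDeriv (k + 1) y t‖) := by
  obtain ⟨C, hC0, hC⟩ := hG.fderiv.comp_bound k M
  refine ⟨2 ^ k * (C * (1 + M)), by positivity, fun y τ₀ t hy hyt hj => ?_⟩
  have hyd : ContDiff ℝ (⊤ : ℕ∞) (deriv y) :=
    hy.deriv' 
  have hd : deriv (fun t => G (t + τ₀, y t)) =
      fun t => (_root_.fderiv ℝ G (t + τ₀, y t)) ((1 : ℝ), deriv y t) := by
    ext t
    have h1 : HasDerivAt (fun t => (t + τ₀, y t)) ((1 : ℝ), deriv y t) t :=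
      ((hasDerivAt_id t).add_const τ₀).prodMk ((hy.differentiable (by simp)) t).hasDerivAt
    have h2 : HasFDerivAt G (_root_.fderiv ℝ G (t + τ₀, y t)) (t + τ₀, y t) :=
      ((hG.sm.differentiable (by simp)) _).hasFDerivAt
    exact (h2.comp_hasDerivAt t h1).deriv
  rw [iteratedDeriv_succ', hd]
  have hc : ContDiff ℝ (⊤ : ℕ∞) (fun t : ℝ => (t + τ₀, y t)) :=
    (contDiff_id.add contDiff_const).prodMk hy
  have := leib_le (n := k) (t := t) (hG.fderiv.sm.comp hc)
    (g := fun t => ((1 : ℝ), deriv y t)) (contDiff_const.prodMk hyd)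
    (Q := (C * (1 + M)) * (1 + ‖iteratedDeriv (k + 1) y t‖)) ?_
  · rw [mul_assoc]; exact this
  intro i hi
  have h1 := hC y τ₀ t hy hyt hj i hi
  have h2 : ‖iteratedDeriv (k - i) (fun t => ((1 : ℝ), deriv y t)) t‖ ≤
      (1 + M) * (1 + ‖iteratedDeriv (k + 1) y t‖) := by
    rw [← norm_iteratedFDeriv_eq_norm_iteratedDeriv,
      iteratedFDeriv_prodMk (n := (⊤ : ℕ∞)) contDiffAt_const hyd.contDiffAt (nat_le_smooth _),
      ContinuousMultilinearMap.opNorm_prod, norm_iteratedFDeriv_eq_norm_iteratedDeriv,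
      norm_iteratedFDeriv_eq_norm_iteratedDeriv]
    have hn := norm_nonneg (iteratedDeriv (k + 1) y t)
    have hMn := mul_nonneg hM hn
    apply max_le
    · rw [iteratedDeriv_const]
      split_ifs <;> simp <;> nlinarith
    · rw [← iteratedDeriv_succ']
      rcases Nat.eq_zero_or_pos i with h0 | h0
      · subst h0; simp only [Nat.sub_zero]; nlinarith
      · have := hj (k - i + 1) (by omega) (by omega)
        nlinarith
  calc _ ≤ C * ((1 + M) * (1 + ‖iteratedDeriv (k + 1) y t‖)) :=
        mul_le_mul h1 h2 (norm_nonneg _) hC0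
    _ = _ := by ring

/-- Derivatives of the product of a coefficient along the curve and the velocity. -/
theorem Per.lin_bound {b : ℝ × ℂ → ℂ →L[ℝ] E} (hb : Per b) (k : ℕ) (M : ℝ) (hM : 0 ≤ M) :
    ∃ C, 0 ≤ C ∧ ∀ (y : ℝ → ℂ) (τ₀ t : ℝ), ContDiff ℝ (⊤ : ℕ∞) y → ‖y t‖ ≤ 1 →
      (∀ j, 1 ≤ j → j ≤ k → ‖iteratedDeriv j y t‖ ≤ M) →
      ‖iteratedDeriv k (fun t => b (t + τ₀, y t) (deriv y t)) t‖ ≤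
        C * (1 + ‖iteratedDeriv (k + 1) y t‖) := by
  obtain ⟨C, hC0, hC⟩ := hb.comp_bound k M
  refine ⟨2 ^ k * (C * (1 + M)), by positivity, fun y τ₀ t hy hyt hj => ?_⟩
  have hyd : ContDiff ℝ (⊤ : ℕ∞) (deriv y) :=
    hy.deriv'
  have hc : ContDiff ℝ (⊤ : ℕ∞) (fun t : ℝ => (t + τ₀, y t)) :=
    (contDiff_id.add contDiff_const).prodMk hy
  rw [mul_assoc]
  refine leib_le (n := k) (t := t) (hb.sm.comp hc) hyd
    (Q := (C * (1 + M)) * (1 + ‖iteratedDeriv (k + 1) y t‖)) ?_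
  intro i hi
  have h1 := hC y τ₀ t hy hyt hj i hi
  have hn := norm_nonneg (iteratedDeriv (k + 1) y t)
  have hMn := mul_nonneg hM hn
  have h2 : ‖iteratedDeriv (k - i) (deriv y) t‖ ≤ (1 + M) * (1 + ‖iteratedDeriv (k + 1) y t‖) := by
    rw [← iteratedDeriv_succ']
    rcases Nat.eq_zero_or_pos i with h0 | h0
    · subst h0; simp only [Nat.sub_zero]; nlinarith
    · have := hj (k - i + 1) (by omega) (by omega)
      nlinarith
  calc _ ≤ C * ((1 + M) * (1 + ‖iteratedDeriv (k + 1) y t‖)) :=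
        mul_le_mul h1 h2 (norm_nonneg _) hC0
    _ = _ := by ring

/-- The same with one more derivative. -/
theorem Per.lin_bound' {b : ℝ × ℂ → ℂ →L[ℝ] E} (hb : Per b) (k : ℕ) (hk : 1 ≤ k) (M : ℝ) (hM : 0 ≤ M) :
    ∃ C, 0 ≤ C ∧ ∀ (y : ℝ → ℂ) (τ₀ t : ℝ), ContDiff ℝ (⊤ : ℕ∞) y → ‖y t‖ ≤ 1 →
      (∀ j, 1 ≤ j → j ≤ k → ‖iteratedDeriv j y t‖ ≤ M) →
      ‖iteratedDeriv (k + 1) (fun t => b (t + τ₀, y t) (deriv y t)) t‖ ≤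
        C * (1 + ‖iteratedDeriv (k + 1) y t‖ + ‖iteratedDeriv (k + 2) y t‖) := by
  obtain ⟨C, hC0, hC⟩ := hb.comp_bound k M
  obtain ⟨C', hC0', hC'⟩ := hb.comp_bound_top k M hM
  refine ⟨2 ^ (k + 1) * ((C + C') * (1 + M)), by positivity, fun y τ₀ t hy hyt hj => ?_⟩
  have hyd : ContDiff ℝ (⊤ : ℕ∞) (deriv y) :=
    hy.deriv'
  have hc : ContDiff ℝ (⊤ : ℕ∞) (fun t : ℝ => (t + τ₀, y t)) :=
    (contDiff_id.add contDiff_const).prodMk hy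
  set n1 := ‖iteratedDeriv (k + 1) y t‖ with hn1
  set n2 := ‖iteratedDeriv (k + 2) y t‖ with hn2
  have p1 : 0 ≤ n1 := norm_nonneg _
  have p2 : 0 ≤ n2 := norm_nonneg _
  rw [mul_assoc]
  refine leib_le (n := k + 1) (t := t) (hb.sm.comp hc) hyd
    (Q := ((C + C') * (1 + M)) * (1 + n1 + n2)) ?_
  intro i hi
  rw [← iteratedDeriv_succ']
  rcases Nat.lt_or_ge k i with h | h
  · obtain rfl : i = k + 1 := by omega
    have h1 := hC' y τ₀ t hy hyt hj
    have h2 := hj 1 le_rfl hk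
    rw [show k + 1 - (k + 1) + 1 = 1 by omega]
    calc _ ≤ (C' * (1 + n1)) * M := mul_le_mul h1 h2 (norm_nonneg _) (by positivity)
      _ = C' * (M * (1 + n1)) := by ring
      _ ≤ (C + C') * ((1 + M) * (1 + n1 + n2)) :=
        mul_le_mul (by linarith) (mul_le_mul (by linarith) (by linarith) (by linarith)
          (by linarith)) (by positivity) (by positivity)
      _ = _ := by ring
  · have h1 := hC y τ₀ t hy hyt hj i h
    have h2 : ‖iteratedDeriv (k + 1 - i + 1) y t‖ ≤ (1 + M) * (1 + n1 + n2) := by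
      have q1 := mul_nonneg hM p1
      have q2 := mul_nonneg hM p2
      rcases Nat.lt_or_ge i 2 with h0 | h0
      · interval_cases i
        · simp only [Nat.sub_zero]
          rw [show k + 1 + 1 = k + 2 by omega, ← hn2]; nlinarith
        · simp only [Nat.add_sub_cancel, ← hn1]; nlinarith
      · have := hj (k + 1 - i + 1) (by omega) (by omega)
        nlinarith
    calc _ ≤ C * ((1 + M) * (1 + n1 + n2)) := mul_le_mul h1 h2 (norm_nonneg _) hC0
      _ ≤ (C + C') * ((1 + M) * (1 + n1 + n2)) := by gcongr; linarith
      _ = _ := by ring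

end PerSec


/-! ### The differential inequalities for tangential derivatives -/

/-- Multiplication as an `ℝ`-linear map. -/
noncomputable abbrev mulC (c : ℂ) : ℂ →L[ℝ] ℂ := ContinuousLinearMap.mul ℝ ℂ c

theorem rel_bound {Ω : ℝ × ℂ → ℂ →L[ℝ] ℂ} (hΩ : Per Ω) (k : ℕ) (hk : 1 ≤ k) (M : ℝ) (hM : 0 ≤ M) :
    ∃ C, 0 ≤ C ∧ ∀ (y u : ℝ → ℂ) (τ₀ t : ℝ), ContDiff ℝ (⊤ : ℕ∞) y → ContDiff ℝ (⊤ : ℕ∞) u →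
      ‖y t‖ ≤ 1 → (∀ j, 1 ≤ j → j ≤ k → ‖iteratedDeriv j y t‖ ≤ M) →
      (∀ j < k, ‖iteratedDeriv j u t‖ ≤ M) →
      (∀ t, deriv y t = Ω (t + τ₀, y t) (u t)) →
      ‖iteratedDeriv (k + 1) y t‖ ≤ C * (1 + ‖iteratedDeriv k u t‖) ∧
      ‖iteratedDeriv (k + 2) y t‖ ≤
        C * (1 + ‖iteratedDeriv k u t‖ + ‖iteratedDeriv (k + 1) u t‖) := by
  obtain ⟨B, hB0, hB⟩ := hΩ.comp_bound k M
  obtain ⟨B', hB0', hB'⟩ := hΩ.comp_bound_top k M hM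
  set C1 : ℝ := 2 ^ k * (B * (1 + M)) with hC1
  have hC10 : 0 ≤ C1 := by positivity
  set C2 : ℝ := 2 ^ (k + 1) * ((B + B' * (1 + C1)) * (1 + M)) with hC2
  have hC20 : 0 ≤ C2 := by positivity
  refine ⟨C1 + C2, by positivity, fun y u τ₀ t hy hu hyt hj hju hrel => ?_⟩
  have hc : ContDiff ℝ (⊤ : ℕ∞) (fun t : ℝ => (t + τ₀, y t)) :=
    (contDiff_id.add contDiff_const).prodMk hy
  have hW := hΩ.sm.comp hc
  have hder : deriv y = fun t => Ω (t + τ₀, y t) (u t) := funext hrel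
  set n0 := ‖iteratedDeriv k u t‖ with hn0
  set n1 := ‖iteratedDeriv (k + 1) u t‖ with hn1
  have p0 : 0 ≤ n0 := norm_nonneg _
  have p1 : 0 ≤ n1 := norm_nonneg _
  have q0 := mul_nonneg hM p0
  have q1 := mul_nonneg hM p1
  have first : ‖iteratedDeriv (k + 1) y t‖ ≤ C1 * (1 + n0) := by
    rw [iteratedDeriv_succ', hder, hC1, mul_assoc]
    refine leib_le (n := k) (t := t) hW hu (Q := (B * (1 + M)) * (1 + n0)) ?_
    intro i hi
    have h1 := hB y τ₀ t hy hyt hj i hi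
    have h2 : ‖iteratedDeriv (k - i) u t‖ ≤ (1 + M) * (1 + n0) := by
      rcases Nat.eq_zero_or_pos i with h0 | h0
      · subst h0; simp only [Nat.sub_zero]; nlinarith
      · have := hju (k - i) (by omega)
        nlinarith
    calc _ ≤ B * ((1 + M) * (1 + n0)) := mul_le_mul h1 h2 (norm_nonneg _) hB0
      _ = _ := by ring
  refine ⟨first.trans (mul_le_mul_of_nonneg_right (by linarith) (by positivity)), ?_⟩
  have second : ‖iteratedDeriv (k + 2) y t‖ ≤ C2 * (1 + n0 + n1) := by
    rw [iteratedDeriv_succ', hder, hC2, mul_assoc]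
    refine leib_le (n := k + 1) (t := t) hW hu
      (Q := ((B + B' * (1 + C1)) * (1 + M)) * (1 + n0 + n1)) ?_
    intro i hi
    rcases Nat.lt_or_ge k i with h | h
    · obtain rfl : i = k + 1 := by omega
      have h1 := hB' y τ₀ t hy hyt hj
      have h1' : B' * (1 + ‖iteratedDeriv (k + 1) y t‖) ≤ (B' * (1 + C1)) * (1 + n0) := by
        rw [mul_assoc]
        refine mul_le_mul_of_nonneg_left ?_ hB0'
        nlinarith
      have h2 := hju 0 (by omega)
      rw [show k + 1 - (k + 1) = 0 by omega]
      have e1 : 0 ≤ B' * (1 + C1) := by positivity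
      calc _ ≤ ((B' * (1 + C1)) * (1 + n0)) * M :=
            mul_le_mul (h1.trans h1') h2 (norm_nonneg _) (by positivity)
        _ = (B' * (1 + C1)) * (M * (1 + n0)) := by ring
        _ ≤ (B + B' * (1 + C1)) * ((1 + M) * (1 + n0 + n1)) :=
          mul_le_mul (by linarith) (mul_le_mul (by linarith) (by linarith) (by linarith)
            (by linarith)) (by positivity) (by positivity)
        _ = _ := by ring
    · have h1 := hB y τ₀ t hy hyt hj i h
      have h2 : ‖iteratedDeriv (k + 1 - i) u t‖ ≤ (1 + M) * (1 + n0 + n1) := by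
        rcases Nat.lt_or_ge i 2 with h0 | h0
        · interval_cases i
          · simp only [Nat.sub_zero, ← hn1]; nlinarith
          · simp only [Nat.add_sub_cancel, ← hn0]; nlinarith
        · have := hju (k + 1 - i) (by omega)
          nlinarith
      have e1 : 0 ≤ B' * (1 + C1) := by positivity
      calc _ ≤ B * ((1 + M) * (1 + n0 + n1)) := mul_le_mul h1 h2 (norm_nonneg _) hB0
        _ ≤ (B + B' * (1 + C1)) * ((1 + M) * (1 + n0 + n1)) :=
          mul_le_mul_of_nonneg_right (by linarith) (by positivity)
        _ = _ := by ring
  exact second.trans (mul_le_mul_of_nonneg_right (by linarith) (by positivity))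

section Lap
variable {J : Set ℝ}

theorem sm_gam (τ₀ : ℝ) {z : ℝ × ℝ → ℂ} (hz : Sm J z) :
    ContDiffOn ℝ (⊤ : ℕ∞) (fun p : ℝ × ℝ => (p.2 + τ₀, z p)) (Str J) :=
  ContDiffOn.prodMk ((contDiff_snd.add contDiff_const).contDiffOn) hz

theorem sm_comp {E : Type*} [NormedAddCommGroup E] [NormedSpace ℝ E] {q : ℝ × ℂ → E} (hq : Per q)
    (τ₀ : ℝ) {z : ℝ × ℝ → ℂ} (hz : Sm J z) : Sm J (fun p => q (p.2 + τ₀, z p)) :=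
  hq.sm.comp_contDiffOn (sm_gam τ₀ hz)

theorem pdt_comp {E : Type*} [NormedAddCommGroup E] [NormedSpace ℝ E] {q : ℝ × ℂ → E} (hq : Per q)
    (τ₀ : ℝ) {z : ℝ × ℝ → ℂ} (hz : Sm J z) {p : ℝ × ℝ} (hp : p ∈ Str J) :
    pdt (Str J) (fun p => q (p.2 + τ₀, z p)) p
      = fderiv ℝ q (p.2 + τ₀, z p) (1, pdt (Str J) z p) := by
  obtain ⟨s, t⟩ := p
  refine (sm_comp hq τ₀ hz).pdt_eq hp.1 ?_
  have h1 : HasDerivAt (fun t => (t + τ₀, z (s, t))) ((1 : ℝ), pdt (Str J) z (s, t)) t :=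
    ((hasDerivAt_id t).add_const τ₀).prodMk (hz.hasT hp.1 t)
  have h2 : HasFDerivAt q (fderiv ℝ q (t + τ₀, z (s, t))) (t + τ₀, z (s, t)) :=
    ((hq.sm.differentiable (by simp)) _).hasFDerivAt
  exact h2.comp_hasDerivAt t h1

theorem pds_comp {E : Type*} [NormedAddCommGroup E] [NormedSpace ℝ E] (hJ : GoodI J)
    {q : ℝ × ℂ → E} (hq : Per q)
    (τ₀ : ℝ) {z : ℝ × ℝ → ℂ} (hz : Sm J z) {p : ℝ × ℝ} (hp : p ∈ Str J) :
    pds (Str J) (fun p => q (p.2 + τ₀, z p)) p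
      = fderiv ℝ q (p.2 + τ₀, z p) (0, pds (Str J) z p) := by
  obtain ⟨s, t⟩ := p
  refine (sm_comp hq τ₀ hz).pds_eq hJ hp.1 ?_
  have h1 : HasDerivWithinAt (fun s => (t + τ₀, z (s, t))) ((0 : ℝ), pds (Str J) z (s, t)) J s :=
    (hasDerivWithinAt_const s J (t + τ₀)).prodMk (hz.hasS hp.1 t)
  have h2 : HasFDerivAt q (fderiv ℝ q (t + τ₀, z (s, t))) (t + τ₀, z (s, t)) :=
    ((hq.sm.differentiable (by simp)) _).hasFDerivAt
  exact h2.comp_hasDerivWithinAt s h1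

/-- zeroth order coefficient -/
noncomputable def coefA (F q : ℝ × ℂ → ℂ) (x : ℝ × ℂ) : ℂ :=
  mulC (-Complex.I) (fderiv ℝ q x (1, 0)) + fderiv ℝ q x (0, F x)

/-- first order coefficient -/
noncomputable def coefB (q : ℝ × ℂ → ℂ) (x : ℝ × ℂ) : ℂ →L[ℝ] ℂ :=
  (mulC (-Complex.I)).comp ((fderiv ℝ q x).comp (ContinuousLinearMap.inr ℝ ℝ ℂ)) +
    (fderiv ℝ q x).comp ((ContinuousLinearMap.inr ℝ ℝ ℂ).comp (mulC (-Complex.I)))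

theorem per_coefA {F q : ℝ × ℂ → ℂ} (hF : Per F) (hq : Per q) : Per (coefA F q) where
  sm := by
    have h := hq.fderiv.sm
    exact ((mulC (-Complex.I)).contDiff.comp (h.clm_apply contDiff_const)).add
      (h.clm_apply (contDiff_const.prodMk hF.sm))
  per τ w := by simp only [coefA, hq.fderiv.per, hF.per]

theorem per_coefB {q : ℝ × ℂ → ℂ} (hq : Per q) : Per (coefB q) where
  sm := by
    have h := hq.fderiv.sm
    exact (contDiff_const.clm_comp (h.clm_comp contDiff_const)).add (h.clm_comp contDiff_const)
  per τ w := by simp only [coefB, hq.fderiv.per]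

theorem pds_rel (hJ : GoodI J) {u Q : ℝ × ℝ → ℂ} (hu : Sm J u) (hQ : Sm J Q)
    (E2 : ∀ p ∈ Str J, pds (Str J) u p = -Complex.I * pdt (Str J) u p + pdt (Str J) Q p) (n : ℕ) :
    EqOn (pds (Str J) ((pdt (Str J))^[n] u))
      (fun p => mulC (-Complex.I) ((pdt (Str J))^[n + 1] u p) + (pdt (Str J))^[n + 1] Q p)
      (Str J) := by
  have hut := hu.pdt hJ
  have hQt := hQ.pdt hJ
  have hm : Sm J (fun p => mulC (-Complex.I) (pdt (Str J) u p)) :=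
    (mulC (-Complex.I)).contDiff.comp_contDiffOn hut
  refine (pds_pdt_iter hJ hu n).trans ?_
  have e : EqOn (pds (Str J) u) (fun p => mulC (-Complex.I) (pdt (Str J) u p) + pdt (Str J) Q p)
      (Str J) := fun p hp => E2 p hp
  refine (pdt_iter_congr e n).trans ?_
  refine (pdt_iter_add hJ hm hQt n).trans ?_
  intro p hp
  simp only [Function.iterate_succ_apply]
  rw [pdt_iter_clm hJ (mulC (-Complex.I)) hut n hp]

theorem lap_eq (hJ : GoodI J) {F q : ℝ × ℂ → ℂ} (hF : Per F) (hq : Per q) {τ₀ : ℝ}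
    {z u : ℝ × ℝ → ℂ} (hz : Sm J z) (hu : Sm J u)
    (E1 : ∀ p ∈ Str J, pds (Str J) z p = -Complex.I * pdt (Str J) z p + F (p.2 + τ₀, z p))
    (E2 : ∀ p ∈ Str J, pds (Str J) u p = -Complex.I * pdt (Str J) u p
      + pdt (Str J) (fun p => q (p.2 + τ₀, z p)) p) (n : ℕ) {p : ℝ × ℝ} (hp : p ∈ Str J) :
    pds (Str J) (pds (Str J) ((pdt (Str J))^[n] u)) p
        + pdt (Str J) (pdt (Str J) ((pdt (Str J))^[n] u)) p
      = (pdt (Str J))^[n + 1] (fun p => coefA F q (p.2 + τ₀, z p)) p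
        + (pdt (Str J))^[n + 1] (fun p => coefB q (p.2 + τ₀, z p) (pdt (Str J) z p)) p := by
  set Q : ℝ × ℝ → ℂ := fun p => q (p.2 + τ₀, z p) with hQdef
  have hQ : Sm J Q := sm_comp hq τ₀ hz
  have r := pds_rel hJ hu hQ E2
  have hun : ∀ n, Sm J ((pdt (Str J))^[n] u) := fun n => hu.pdt_iter hJ n
  have hQn : ∀ n, Sm J ((pdt (Str J))^[n] Q) := fun n => hQ.pdt_iter hJ n
  have h2 : pds (Str J) (pds (Str J) ((pdt (Str J))^[n] u)) p
      = mulC (-Complex.I) (pds (Str J) ((pdt (Str J))^[n + 1] u) p)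
        + pds (Str J) ((pdt (Str J))^[n + 1] Q) p := by
    rw [pds_congr (r n) hp]
    obtain ⟨s, t⟩ := p
    have hs : Sm J (fun p => mulC (-Complex.I) ((pdt (Str J))^[n + 1] u p)
        + (pdt (Str J))^[n + 1] Q p) :=
      ContDiffOn.add ((mulC (-Complex.I)).contDiff.comp_contDiffOn (hun (n + 1))) (hQn (n + 1))
    refine hs.pds_eq hJ hp.1 ?_
    exact ((mulC (-Complex.I)).hasFDerivAt.comp_hasDerivWithinAt s ((hun (n + 1)).hasS hp.1 t)).add
      ((hQn (n + 1)).hasS hp.1 t)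
  have hA : Sm J (fun p => coefA F q (p.2 + τ₀, z p)) := sm_comp (per_coefA hF hq) τ₀ hz
  have hB : Sm J (fun p => coefB q (p.2 + τ₀, z p) (pdt (Str J) z p)) :=
    ContDiffOn.clm_apply (sm_comp (per_coefB hq) τ₀ hz) (hz.pdt hJ)
  have hmQ : Sm J (fun p => mulC (-Complex.I) (pdt (Str J) Q p)) :=
    (mulC (-Complex.I)).contDiff.comp_contDiffOn (hQ.pdt hJ)
  have e : EqOn (fun p => mulC (-Complex.I) (pdt (Str J) Q p) + pds (Str J) Q p)
      (fun p => coefA F q (p.2 + τ₀, z p) + coefB q (p.2 + τ₀, z p) (pdt (Str J) z p)) (Str J) := by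
    intro p hp
    simp only [hQdef]
    rw [pdt_comp hq τ₀ hz hp, pds_comp hJ hq τ₀ hz hp, E1 p hp]
    set D := fderiv ℝ q (p.2 + τ₀, z p)
    have d1 : ((1 : ℝ), pdt (Str J) z p) = (1, 0) + (0, pdt (Str J) z p) := by simp
    have d2 : ((0 : ℝ), -Complex.I * pdt (Str J) z p + F (p.2 + τ₀, z p))
      = (0, F (p.2 + τ₀, z p)) + (0, -Complex.I * pdt (Str J) z p) := by
      simp [add_comm]
    rw [d1, d2, map_add, map_add]
    simp only [coefA, coefB, add_apply, ContinuousLinearMap.comp_apply,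
      ContinuousLinearMap.inr_apply, ContinuousLinearMap.mul_apply', map_add]
    ring
  have e2 := (pdt_iter_congr e (n + 1)) hp
  have e3 := pdt_iter_add hJ hmQ (hQ.pds hJ) (n + 1) hp
  have e4 := pdt_iter_add hJ hA hB (n + 1) hp
  have e5 := pdt_iter_clm hJ (mulC (-Complex.I)) (hQ.pdt hJ) (n + 1) hp
  have e6 := pds_pdt_iter hJ hQ (n + 1) hp
  have e7 := r (n + 1) hp
  beta_reduce at e3 e4 e5 e6 e7
  rw [e3, e4, e5] at e2
  rw [h2, e7, e6, ← e2]
  simp only [ContinuousLinearMap.mul_apply']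
  rw [show (pdt (Str J))^[n + 1 + 1] u = pdt (Str J) (pdt (Str J) ((pdt (Str J))^[n] u)) by
    simp only [Function.iterate_succ_apply']]
  rw [← Function.iterate_succ_apply]
  linear_combination (pdt (Str J) (pdt (Str J) ((pdt (Str J))^[n] u)) p) * Complex.I_mul_I

end Lap

theorem step_bounds {F q : ℝ × ℂ → ℂ} {Ω : ℝ × ℂ → ℂ →L[ℝ] ℂ} (hF : Per F) (hq : Per q) (hΩ : Per Ω)
    (m : ℕ) (M : ℝ) (hM : 0 ≤ M) :
    ∃ C, 0 ≤ C ∧ ∀ (J : Set ℝ) (z u : ℝ × ℝ → ℂ) (τ₀ : ℝ), GoodI J → Sm J z → Sm J u →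
      (∀ p ∈ Str J, pds (Str J) z p = -Complex.I * pdt (Str J) z p + F (p.2 + τ₀, z p)) →
      (∀ p ∈ Str J, pds (Str J) u p = -Complex.I * pdt (Str J) u p
        + pdt (Str J) (fun p => q (p.2 + τ₀, z p)) p) →
      (∀ p ∈ Str J, pdt (Str J) z p = Ω (p.2 + τ₀, z p) (u p)) →
      ∀ p ∈ Str J, ‖z p‖ ≤ 1 →
      (∀ j, 1 ≤ j → j ≤ m + 1 → ‖(pdt (Str J))^[j] z p‖ ≤ M) →
      (∀ j < m + 1, ‖(pdt (Str J))^[j] u p‖ ≤ M) →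
      ‖pds (Str J) (pds (Str J) ((pdt (Str J))^[m] u)) p
        + pdt (Str J) (pdt (Str J) ((pdt (Str J))^[m] u)) p‖
          ≤ C * (1 + ‖(pdt (Str J))^[m + 1] u p‖) ∧
      ‖pds (Str J) (pds (Str J) ((pdt (Str J))^[m + 1] u)) p
        + pdt (Str J) (pdt (Str J) ((pdt (Str J))^[m + 1] u)) p‖
          ≤ C * (1 + ‖(pdt (Str J))^[m + 1] u p‖ + ‖(pdt (Str J))^[m + 2] u p‖) ∧
      ‖(pdt (Str J))^[m + 2] z p‖ ≤ C * (1 + ‖(pdt (Str J))^[m + 1] u p‖) := by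
  obtain ⟨R, hR0, hR⟩ := rel_bound hΩ (m + 1) (by omega) M hM
  obtain ⟨A1, hA10, hA1⟩ := (per_coefA hF hq).comp_bound (m + 1) M
  obtain ⟨A2, hA20, hA2⟩ := (per_coefA hF hq).comp_bound_top (m + 1) M hM
  obtain ⟨B1, hB10, hB1⟩ := (per_coefB hq).lin_bound (m + 1) M hM
  obtain ⟨B2, hB20, hB2⟩ := (per_coefB hq).lin_bound' (m + 1) (by omega) M hM
  refine ⟨A1 + (A2 + B1) * (1 + R) + B2 * (1 + 2 * R) + R, by positivity,
    fun J z u τ₀ hJ hz hu E1 E2 E3 p hp hz1 hzj huj => ?_⟩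
  have l1 := lap_eq hJ hF hq hz hu E1 E2 m hp
  have l2 := lap_eq hJ hF hq hz hu E1 E2 (m + 1) hp
  have hA : Sm J (fun p => coefA F q (p.2 + τ₀, z p)) := sm_comp (per_coefA hF hq) τ₀ hz
  have hB : Sm J (fun p => coefB q (p.2 + τ₀, z p) (pdt (Str J) z p)) :=
    ContDiffOn.clm_apply (sm_comp (per_coefB hq) τ₀ hz) (hz.pdt hJ)
  rw [l1, l2]
  obtain ⟨s, t⟩ := p
  have hs := hp.1
  have hd : ∀ t, pdt (Str J) z (s, t) = deriv (fun t => z (s, t)) t :=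
    fun t => ((hz.hasT hs t).deriv).symm
  simp only [pdt_iter_eq hJ hz _ hs] at hzj
  simp only [pdt_iter_eq hJ hu _ hs] at huj
  simp only [pdt_iter_eq hJ hz _ hs, pdt_iter_eq hJ hu _ hs, pdt_iter_eq hJ hA _ hs,
    pdt_iter_eq hJ hB _ hs]
  simp only [hd]
  set y : ℝ → ℂ := fun t => z (s, t) with hy
  have ys : ContDiff ℝ (⊤ : ℕ∞) y := hz.line hs
  have us : ContDiff ℝ (⊤ : ℕ∞) (fun t => u (s, t)) := hu.line hs
  obtain ⟨r1, r2⟩ := hR y (fun t => u (s, t)) τ₀ t ys us hz1 hzj huj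
    (fun t => by rw [hy, ← hd]; exact E3 (s, t) ⟨hs, mem_univ _⟩)
  have a1 := hA1 y τ₀ t ys hz1 hzj (m + 1) le_rfl
  have a2 := hA2 y τ₀ t ys hz1 hzj
  have b1 := hB1 y τ₀ t ys hz1 hzj
  have b2 := hB2 y τ₀ t ys hz1 hzj
  set n0 := ‖iteratedDeriv (m + 1) (fun t => u (s, t)) t‖
  have hn0 : 0 ≤ n0 := norm_nonneg _
  set n1 := ‖iteratedDeriv (m + 1 + 1) (fun t => u (s, t)) t‖
  have hn1 : 0 ≤ n1 := norm_nonneg _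
  set y1 := ‖iteratedDeriv (m + 1 + 1) y t‖
  set y2 := ‖iteratedDeriv (m + 1 + 2) y t‖
  have f0 : 0 ≤ A1 * n0 := by positivity
  have f1 : A2 * (1 + y1) ≤ A2 * (1 + R) * (1 + n0) := by
    rw [mul_assoc]; exact mul_le_mul_of_nonneg_left (by nlinarith) hA20
  have f2 : B1 * (1 + y1) ≤ B1 * (1 + R) * (1 + n0) := by
    rw [mul_assoc]; exact mul_le_mul_of_nonneg_left (by nlinarith) hB10
  have f3 : B2 * (1 + y1 + y2) ≤ B2 * (1 + 2 * R) * (1 + n0 + n1) := by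
    rw [mul_assoc]
    refine mul_le_mul_of_nonneg_left ?_ hB20
    have : 0 ≤ R * n1 := by positivity
    nlinarith
  have g1 : 0 ≤ A2 * (1 + R) * (1 + n0) := by positivity
  have g2 : 0 ≤ B1 * (1 + R) * (1 + n0) := by positivity
  have g3 : 0 ≤ B2 * (1 + 2 * R) * (1 + n0) := by positivity
  have g4 : 0 ≤ R * (1 + n0) := by positivity
  have g5 : 0 ≤ A1 * (1 + n0 + n1) := by positivity
  have g6 : 0 ≤ A2 * (1 + R) * n1 := by positivity
  have g7 : 0 ≤ B1 * (1 + R) * (1 + n0 + n1) := by positivity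
  have g8 : 0 ≤ R * (1 + n0 + n1) := by positivity
  have g9 : 0 ≤ A1 * (1 + n0) := by positivity
  refine ⟨(norm_add_le _ _).trans ?_, (norm_add_le _ _).trans ?_, ?_⟩
  · refine (add_le_add a1 (b1.trans f2)).trans ?_
    linarith
  · refine (add_le_add (a2.trans f1) (b2.trans f3)).trans ?_
    linarith
  · refine r1.trans ?_
    linarith


/-! ### Combining the Bernstein estimate with the differential inequalities -/

theorem disc_bound {F q : ℝ × ℂ → ℂ} {Ω : ℝ × ℂ → ℂ →L[ℝ] ℂ} (hF : Per F) (hq : Per q) (hΩ : Per Ω)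
    (m : ℕ) (M R : ℝ) (hM : 0 ≤ M) (hR : 0 < R) (hR1 : R ≤ 1) :
    ∃ C, 0 ≤ C ∧ ∀ (J : Set ℝ) (z u : ℝ × ℝ → ℂ) (τ₀ σ τ : ℝ), GoodI J → Sm J z → Sm J u →
      (∀ p ∈ Str J, pds (Str J) z p = -Complex.I * pdt (Str J) z p + F (p.2 + τ₀, z p)) →
      (∀ p ∈ Str J, pds (Str J) u p = -Complex.I * pdt (Str J) u p
        + pdt (Str J) (fun p => q (p.2 + τ₀, z p)) p) →
      (∀ p ∈ Str J, pdt (Str J) z p = Ω (p.2 + τ₀, z p) (u p)) →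
      (∀ p ∈ Str J, ‖z p‖ ≤ 1) →
      (∀ p ∈ Str J, ∀ j, 1 ≤ j → j ≤ m + 1 → ‖(pdt (Str J))^[j] z p‖ ≤ M) →
      (∀ p ∈ Str J, ∀ j < m + 1, ‖(pdt (Str J))^[j] u p‖ ≤ M) →
      (∀ s ∈ J, J ∈ nhdsWithin s (Ici s)) → IsClosed (J ∩ Icc (σ - R) (σ + R)) →
      (∀ p ∈ Str J, (p.1 - σ) ^ 2 + (p.2 - τ) ^ 2 ≤ R ^ 2 → J ∈ nhds p.1 ∨ (p.1 = σ ∧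
        ∀ j, ip ((pdt (Str J))^[j] u p) (pds (Str J) ((pdt (Str J))^[j] u) p) = 0)) →
      ∀ p ∈ Str J, (p.1 - σ) ^ 2 + (p.2 - τ) ^ 2 ≤ R ^ 2 / 4 →
      ‖(pdt (Str J))^[m + 2] z p‖ ≤ C := by
  obtain ⟨C, hC0, hC⟩ := step_bounds hF hq hΩ m M hM
  set N : ℝ := M + C with hN
  have hN0 : 0 ≤ N := by positivity
  set B : ℝ := (N^2+2*(80+2*N+N^2)*N^2+(80+2*N+N^2)*N^4+(80+2*N+N^2)*N^2) / (3/4*R^2)^2 with hB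
  have hB0 : 0 ≤ B := by positivity
  refine ⟨C * (2 + B), by positivity, ?_⟩
  intro J z u τ₀ σ τ hJ hz hu E1 E2 E3 hz1 hzj huj hright hK hbd p hp hpR
  have hst := fun p hp => hC J z u τ₀ hJ hz hu E1 E2 E3 p hp (hz1 p hp) (hzj p hp) (huj p hp)
  have key := bernstein_disc (v := (pdt (Str J))^[m] u) (M := N) hJ (hu.pdt_iter hJ m) hN0 hR hR1
    hright hK (τ := τ)
    (fun p hp h => by
      rcases hbd p hp h with h | ⟨h1, h2⟩
      · exact Or.inl h
      · refine Or.inr ⟨h1, h2 m, ?_⟩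
        have := h2 (m + 1)
        rw [Function.iterate_succ_apply'] at this
        exact this)
    (fun p hp h => (huj p hp m (by omega)).trans (by linarith))
    (fun p hp h => by
      have := (hst p hp).1
      rw [Function.iterate_succ_apply'] at this
      exact this.trans (mul_le_mul_of_nonneg_right (by linarith) (by positivity)))
    (fun p hp h => by
      have := (hst p hp).2.1
      simp only [Function.iterate_succ_apply'] at this
      exact this.trans (mul_le_mul_of_nonneg_right (by linarith) (by positivity)))
    hp hpR
  have h3 := (hst p hp).2.2
  rw [Function.iterate_succ_apply' _ m u] at h3
  set x := ‖pdt (Str J) ((pdt (Str J))^[m] u) p‖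
  have hx : x ^ 2 ≤ B := by
    rw [hB, le_div_iff₀ (by positivity)]; linarith
  have hx1 : x ≤ 1 + B := by nlinarith [sq_nonneg (x - 1)]
  exact h3.trans (mul_le_mul_of_nonneg_left (by linarith) hC0)

/-! ### The coefficient functions -/

/-- The inhomogeneity of the Floer equation. -/
noncomputable def Ff (H : ℝ → ℂ → ℝ) (x : ℝ × ℂ) : ℂ := Complex.I * XH H x.1 x.2

theorem fderiv_slice {H : ℝ → ℂ → ℝ} (hH : IsAdmissible H) (t : ℝ) (w v : ℂ) :
    fderiv ℝ (H t) w v = fderiv ℝ (fun p : ℝ × ℂ => H p.1 p.2) (t, w) (0, v) := by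
  have h1 : HasFDerivAt (fun p : ℝ × ℂ => H p.1 p.2)
      (fderiv ℝ (fun p : ℝ × ℂ => H p.1 p.2) (t, w)) (t, w) :=
    ((hH.smooth.differentiable (by simp)) _).hasFDerivAt
  have h2 : HasFDerivAt (fun w : ℂ => (t, w)) (ContinuousLinearMap.inr ℝ ℝ ℂ) w :=
    hasFDerivAt_prodMk_right t w
  have h3 := h1.comp w h2
  have h4 : HasFDerivAt (H t) _ w := h3
  rw [h4.fderiv]; rfl

theorem per_H {H : ℝ → ℂ → ℝ} (hH : IsAdmissible H) : Per (fun p : ℝ × ℂ => H p.1 p.2) where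
  sm := hH.smooth
  per t w := hH.periodic t w

theorem per_Ff {H : ℝ → ℂ → ℝ} (hH : IsAdmissible H) : Per (Ff H) := by
  have e : Ff H = fun x => Complex.I * (Complex.I *
      ((fderiv ℝ (fun p : ℝ × ℂ => H p.1 p.2) x (0, 1) : ℝ) +
        (fderiv ℝ (fun p : ℝ × ℂ => H p.1 p.2) x (0, Complex.I) : ℝ) * Complex.I)) := by
    funext x
    simp only [Ff, XH, fderiv_slice hH]
  have h := (per_H hH).fderiv
  rw [e]
  constructor
  · have a (v : ℝ × ℂ) : ContDiff ℝ (⊤ : ℕ∞) (fun x : ℝ × ℂ =>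
        ((fderiv ℝ (fun p : ℝ × ℂ => H p.1 p.2) x v : ℝ) : ℂ)) :=
      Complex.ofRealCLM.contDiff.comp (h.sm.clm_apply contDiff_const)
    exact contDiff_const.mul (contDiff_const.mul ((a _).add ((a _).mul contDiff_const)))
  · intro τ w
    simp only [h.per]

/-- A smooth version of `1 / x`. -/
noncomputable def psi (x : ℝ) : ℝ := Real.smoothTransition (8 * x - 1) / x

theorem psi_smooth : ContDiff ℝ (⊤ : ℕ∞) psi := by
  rw [contDiff_iff_contDiffAt]
  intro x
  rcases lt_or_ge x (1 / 8) with h | h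
  · have : psi =ᶠ[nhds x] fun _ => 0 := by
      filter_upwards [Iio_mem_nhds h] with y hy
      have : Real.smoothTransition (8 * y - 1) = 0 :=
        Real.smoothTransition.zero_of_nonpos (by have := mem_Iio.1 hy; linarith)
      simp [psi, this]
    exact contDiffAt_const.congr_of_eventuallyEq this
  · refine ContDiffAt.div ?_ contDiffAt_id (ne_of_gt (by linarith))
    exact (Real.smoothTransition.contDiff.comp
      ((contDiff_const.mul contDiff_id).sub contDiff_const)).contDiffAt

/-- A smooth version of `1 / w`. -/
noncomputable def zet (w : ℂ) : ℂ := (starRingEnd ℂ) w * (psi (w.re * w.re + w.im * w.im) : ℝ)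

theorem zet_smooth : ContDiff ℝ (⊤ : ℕ∞) zet := by
  have h1 : ContDiff ℝ (⊤ : ℕ∞) (fun w : ℂ => (starRingEnd ℂ) w) := Complex.conjCLE.contDiff
  have hre : ContDiff ℝ (⊤ : ℕ∞) (fun w : ℂ => w.re) := Complex.reCLM.contDiff
  have him : ContDiff ℝ (⊤ : ℕ∞) (fun w : ℂ => w.im) := Complex.imCLM.contDiff
  exact h1.mul (Complex.ofRealCLM.contDiff.comp (psi_smooth.comp ((hre.mul hre).add (him.mul him))))

theorem zet_eq {w : ℂ} (hw : 1 / 2 ≤ ‖w‖) : zet w = w⁻¹ := by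
  have h1 : w.re * w.re + w.im * w.im = ‖w‖ ^ 2 := by
    rw [← Complex.normSq_apply, Complex.normSq_eq_norm_sq]
  have : Real.smoothTransition (8 * ‖w‖ ^ 2 - 1) = 1 :=
    Real.smoothTransition.one_of_one_le (by nlinarith)
  rw [zet, h1, psi, this, Complex.inv_def, Complex.normSq_eq_norm_sq, one_div]

/-- The quotient `F / w`. -/
noncomputable def Gf (H : ℝ → ℂ → ℝ) (x : ℝ × ℂ) : ℂ := zet x.2 * Ff H x

theorem per_Gf {H : ℝ → ℂ → ℝ} (hH : IsAdmissible H) : Per (Gf H) where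
  sm := (zet_smooth.comp contDiff_snd).mul (per_Ff hH).sm
  per τ w := by simp only [Gf, (per_Ff hH).per]

theorem Gf_im {H : ℝ → ℂ → ℝ} (hH : IsAdmissible H) (τ : ℝ) {w : ℂ} (hw : ‖w‖ = 1) :
    (Gf H (τ, w)).im = 0 := by
  have hd : HasFDerivAt (H τ) (fderiv ℝ (H τ) w) w := by
    have : ContDiff ℝ (⊤ : ℕ∞) (H τ) := hH.smooth.comp (contDiff_const.prodMk contDiff_id)
    exact ((this.differentiable (by simp)) w).hasFDerivAt
  have hc : HasDerivAt (fun θ : ℝ => Complex.exp (θ * Complex.I) * w) (Complex.I * w) 0 := by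
    have h1 : HasDerivAt (fun θ : ℝ => (θ : ℂ) * Complex.I) (1 * Complex.I) 0 :=
      (Complex.ofRealCLM.hasDerivAt (x := (0:ℝ))).mul_const Complex.I
    have h2 := (h1.cexp).mul_const w
    simpa using h2
  have hd' : HasFDerivAt (H τ) (fderiv ℝ (H τ) w) (Complex.exp ((0:ℝ) * Complex.I) * w) := by
    simpa using hd
  have h0 := hd'.comp_hasDerivAt (0:ℝ) hc
  have hconst : (H τ ∘ fun θ : ℝ => Complex.exp (θ * Complex.I) * w) = fun _ => H τ w := by
    funext θ
    exact hH.bdry_const τ _ _ (by rw [norm_mul, Complex.norm_exp_ofReal_mul_I, hw, one_mul]) hw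
  rw [hconst] at h0
  have h5 := h0.unique (hasDerivAt_const (0:ℝ) (H τ w))
  have e : Complex.I * w = (-w.im) • (1:ℂ) + w.re • Complex.I := by
    apply Complex.ext <;> simp
  rw [e, map_add, map_smul, map_smul, smul_eq_mul, smul_eq_mul] at h5
  have hz : zet w = (starRingEnd ℂ) w := by
    rw [zet_eq (by rw [hw]; norm_num), Complex.inv_def, Complex.normSq_eq_norm_sq, hw]; simp
  simp only [Gf, Ff, XH, hz]
  simp only [Complex.mul_im, Complex.mul_re, Complex.I_re, Complex.I_im, Complex.add_re,
    Complex.add_im, Complex.ofReal_re, Complex.ofReal_im, Complex.conj_re, Complex.conj_im]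
  linarith

/-! ### Bounds for tangential derivatives of solutions -/

/-- Solutions of the boundary value problem. -/
structure Sol (H : ℝ → ℂ → ℝ) (c₀ S τ₀ : ℝ) (z : ℝ × ℝ → ℂ) : Prop where
  sm : Sm (Ici S) z
  disk : ∀ p ∈ Str (Ici S), ‖z p‖ ≤ 1
  eq : ∀ p ∈ Str (Ici S), pds (Str (Ici S)) z p
    = -Complex.I * pdt (Str (Ici S)) z p + Ff H (p.2 + τ₀, z p)
  bd : ∀ t, ‖z (S, t)‖ = 1
  gs : ∀ p ∈ Str (Ici S), ‖pds (Str (Ici S)) z p‖ ≤ c₀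
  gt : ∀ p ∈ Str (Ici S), ‖pdt (Str (Ici S)) z p‖ ≤ c₀

theorem loc_fderiv {S b : ℝ} (f : ℝ × ℝ → ℂ) {p : ℝ × ℝ} (hp : p ∈ Str (Ico S b)) :
    fderivWithin ℝ f (Str (Ico S b)) p = fderivWithin ℝ f (Str (Ici S)) p := by
  have e : Str (Ico S b) = Str (Ici S) ∩ (Iio b ×ˢ univ) := by
    ext q; simp
  rw [e]
  refine fderivWithin_inter ?_
  exact prod_mem_nhds (Iio_mem_nhds hp.1.2) univ_mem

theorem Sol.low {H : ℝ → ℂ → ℝ} {c₀ S τ₀ : ℝ} {z : ℝ × ℝ → ℂ} (h : Sol H c₀ S τ₀ z) {δ : ℝ}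
    (hδ : c₀ * δ ≤ 1 / 2) (hc : 0 < c₀) {p : ℝ × ℝ} (hp : p ∈ Str (Ico S (S + δ))) :
    1 / 2 ≤ ‖z p‖ := by
  obtain ⟨s, t⟩ := p
  have hs : S ≤ s := hp.1.1
  have hs2 : s < S + δ := hp.1.2
  have h1 := (convex_Ici S).norm_image_sub_le_of_norm_hasDerivWithin_le
    (f := fun s => z (s, t)) (f' := fun s => pds (Str (Ici S)) z (s, t)) (C := c₀)
    (x := S) (y := s)
    (fun x hx => h.sm.hasS hx t) (fun x hx => h.gs _ ⟨hx, mem_univ _⟩) (mem_Ici.2 le_rfl) hs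
  have h2 : ‖s - S‖ ≤ δ := by
    rw [Real.norm_eq_abs, abs_of_nonneg (by linarith)]; linarith
  have h3 := norm_sub_norm_le (z (S, t)) (z (s, t))
  rw [h.bd t, norm_sub_rev] at h3
  have h4 : c₀ * ‖s - S‖ ≤ c₀ * δ := mul_le_mul_of_nonneg_left h2 hc.le
  linarith

theorem sm_div {J : Set ℝ} {f g : ℝ × ℝ → ℂ} (hf : Sm J f) (hg : Sm J g)
    (h0 : ∀ q ∈ Str J, g q ≠ 0) : Sm J (fun q => f q / g q) := by
  simp only [div_eq_mul_inv]
  have h1 : ContDiffOn ℝ (⊤ : ℕ∞) (fun q => (g q)⁻¹) (Str J) := ContDiffOn.inv hg h0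
  exact ContDiffOn.mul hf h1

theorem per_const_id : Per (fun _ : ℝ × ℂ => ContinuousLinearMap.id ℝ ℂ) :=
  ⟨contDiff_const, fun _ _ => rfl⟩

theorem per_mul : Per (fun x : ℝ × ℂ => mulC x.2) :=
  ⟨(ContinuousLinearMap.mul ℝ ℂ).contDiff.comp contDiff_snd, fun _ _ => rfl⟩

theorem per_zet : Per (fun x : ℝ × ℂ => mulC (zet x.2)) :=
  ⟨(ContinuousLinearMap.mul ℝ ℂ).contDiff.comp (zet_smooth.comp contDiff_snd), fun _ _ => rfl⟩

theorem uni_lin {b : ℝ × ℂ → ℂ →L[ℝ] ℂ} (hb : Per b) (m : ℕ) (M : ℝ) (hM : 0 ≤ M) :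
    ∃ C, 0 ≤ C ∧ ∀ (y : ℝ → ℂ) (τ₀ t : ℝ), ContDiff ℝ (⊤ : ℕ∞) y → ‖y t‖ ≤ 1 →
      (∀ j, 1 ≤ j → j ≤ m → ‖iteratedDeriv j y t‖ ≤ M) →
      ∀ k < m, ‖iteratedDeriv k (fun t => b (t + τ₀, y t) (deriv y t)) t‖ ≤ C := by
  choose C hC0 hC using fun k => hb.lin_bound k M hM
  refine ⟨∑ k ∈ Finset.range m, C k * (1 + M),
    Finset.sum_nonneg fun k _ => mul_nonneg (hC0 k) (by linarith), ?_⟩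
  intro y τ₀ t hy hy1 hj k hk
  have h1 := hC k y τ₀ t hy hy1 (fun j h1 h2 => hj j h1 (by omega))
  have h2 := hj (k + 1) (by omega) (by omega)
  have h3 : C k * (1 + M) ≤ ∑ k ∈ Finset.range m, C k * (1 + M) :=
    Finset.single_le_sum (f := fun k => C k * (1 + M))
      (fun k _ => mul_nonneg (hC0 k) (by linarith)) (Finset.mem_range.2 hk)
  exact h1.trans ((mul_le_mul_of_nonneg_left (by linarith) (hC0 k)).trans h3)

theorem interior_bound {H : ℝ → ℂ → ℝ} (hH : IsAdmissible H) (c₀ δ : ℝ)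
    (hδ : 0 < δ) (hδ1 : δ ≤ 1) (m : ℕ) (M : ℝ) (hM : 0 ≤ M) :
    ∃ C, 0 ≤ C ∧ ∀ (S τ₀ : ℝ) (z : ℝ × ℝ → ℂ), Sol H c₀ S τ₀ z →
      (∀ p ∈ Str (Ici S), ∀ j, 1 ≤ j → j ≤ m + 1 → ‖(pdt (Str (Ici S)))^[j] z p‖ ≤ M) →
      ∀ p ∈ Str (Ici S), S + δ / 4 < p.1 → ‖(pdt (Str (Ici S)))^[m + 2] z p‖ ≤ C := by
  obtain ⟨C, hC0, hC⟩ := disc_bound (per_Ff hH) (per_Ff hH) per_const_id m M (δ / 8) hM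
    (by linarith) (by linarith)
  refine ⟨C, hC0, fun S τ₀ z hz hj p hp hpS => ?_⟩
  have hJ := goodI_Ici S
  have hQ : Sm (Ici S) (fun p => Ff H (p.2 + τ₀, z p)) := sm_comp (per_Ff hH) τ₀ hz.sm
  refine hC (Ici S) z (pdt (Str (Ici S)) z) τ₀ p.1 p.2 hJ hz.sm (hz.sm.pdt hJ) hz.eq ?_
    (fun _ _ => rfl) hz.disk hj ?_ ?_ ?_ ?_ p hp (by simp; positivity)
  · intro p hp
    rw [pds_pdt hJ hz.sm hp]
    have e : EqOn (pds (Str (Ici S)) z) (fun p => mulC (-Complex.I) (pdt (Str (Ici S)) z p)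
      + Ff H (p.2 + τ₀, z p)) (Str (Ici S)) := fun p hp => hz.eq p hp
    rw [pdt_congr e hp]
    have hm : Sm (Ici S) (fun p => mulC (-Complex.I) (pdt (Str (Ici S)) z p)) :=
      (mulC (-Complex.I)).contDiff.comp_contDiffOn (hz.sm.pdt hJ)
    have e1 := pdt_iter_add hJ hm hQ 1 hp
    have e2 := pdt_iter_clm hJ (mulC (-Complex.I)) (hz.sm.pdt hJ) 1 hp
    simp only [Function.iterate_one] at e1 e2
    rw [e1, e2]
    rfl
  · intro p hp j hjm
    have := hj p hp (j + 1) (by omega) (by omega)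
    rwa [Function.iterate_succ_apply] at this
  · intro s hs
    exact mem_of_superset self_mem_nhdsWithin (Ici_subset_Ici.2 hs)
  · exact isClosed_Ici.inter isClosed_Icc
  · intro q hq hd
    left
    refine Ici_mem_nhds ?_
    have h1 : (q.1 - p.1) ^ 2 ≤ (δ / 8) ^ 2 := by nlinarith [sq_nonneg (q.2 - p.2)]
    have h2 := abs_le_of_sq_le_sq' h1 (by linarith)
    linarith [h2.1]

theorem boundary_bound {H : ℝ → ℂ → ℝ} (hH : IsAdmissible H) (c₀ δ : ℝ) (hc : 0 < c₀)
    (hδ : 0 < δ) (hδ1 : δ ≤ 1) (hδc : c₀ * δ ≤ 1 / 2) (m : ℕ) (M : ℝ) (hM : 0 ≤ M) :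
    ∃ C, 0 ≤ C ∧ ∀ (S τ₀ : ℝ) (z : ℝ × ℝ → ℂ), Sol H c₀ S τ₀ z →
      (∀ p ∈ Str (Ici S), ∀ j, 1 ≤ j → j ≤ m + 1 → ‖(pdt (Str (Ici S)))^[j] z p‖ ≤ M) →
      ∀ p ∈ Str (Ici S), p.1 ≤ S + δ / 4 → ‖(pdt (Str (Ici S)))^[m + 2] z p‖ ≤ C := by
  obtain ⟨U, hU0, hU⟩ := uni_lin per_zet (m + 1) M hM
  obtain ⟨C, hC0, hC⟩ := disc_bound (per_Ff hH) (per_Gf hH) per_mul m (M + U) (δ / 2)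
    (by positivity) (by linarith) (by linarith)
  refine ⟨C, hC0, fun S τ₀ z hz hj p hp hpS => ?_⟩
  have hJ := goodI_Ico (show S < S + δ by linarith)
  set J := Ico S (S + δ) with hJdef
  have hI := goodI_Ici S
  have hsub : Str J ⊆ Str (Ici S) := fun q hq => ⟨hq.1.1, mem_univ _⟩
  have zs : Sm J z := hz.sm.mono hsub
  have hlow : ∀ q ∈ Str J, 1 / 2 ≤ ‖z q‖ := fun q hq => hz.low hδc hc hq
  have hne : ∀ q ∈ Str J, z q ≠ 0 := fun q hq h0 => by
    have := hlow q hq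
    rw [h0, norm_zero] at this; linarith
  have hit : ∀ k, ∀ q ∈ Str J, (pdt (Str J))^[k] z q = (pdt (Str (Ici S)))^[k] z q := by
    rintro k ⟨s, t⟩ hq
    rw [pdt_iter_eq hJ zs k hq.1 t, pdt_iter_eq hI hz.sm k hq.1.1 t]
  have E1 : ∀ q ∈ Str J, pds (Str J) z q = -Complex.I * pdt (Str J) z q
      + Ff H (q.2 + τ₀, z q) := by
    intro q hq
    have := hz.eq q (hsub hq)
    simp only [pds, pdt] at this ⊢
    rw [loc_fderiv z hq]; exact this
  set u : ℝ × ℝ → ℂ := fun q => pdt (Str J) z q / z q with hu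
  have us : Sm J u := sm_div (zs.pdt hJ) zs hne
  have hQ : Sm J (fun p => Ff H (p.2 + τ₀, z p)) := sm_comp (per_Ff hH) τ₀ zs
  have hG : Sm J (fun p => Gf H (p.2 + τ₀, z p)) := sm_comp (per_Gf hH) τ₀ zs
  have eG : EqOn (fun p => Gf H (p.2 + τ₀, z p)) (fun p => Ff H (p.2 + τ₀, z p) / z p) (Str J) := by
    intro q hq
    simp only [Gf, zet_eq (hlow q hq)]
    rw [div_eq_mul_inv, mul_comm]
  have hG' : Sm J (fun p => Ff H (p.2 + τ₀, z p) / z p) := sm_div hQ zs hne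
  have E2 : ∀ q ∈ Str J, pds (Str J) u q = -Complex.I * pdt (Str J) u q
      + pdt (Str J) (fun p => Gf H (p.2 + τ₀, z p)) q := by
    intro q hq
    rw [pdt_congr eG hq]
    have e1 := E1 q hq
    have hm : Sm J (fun p => mulC (-Complex.I) (pdt (Str J) z p)) :=
      (mulC (-Complex.I)).contDiff.comp_contDiffOn (zs.pdt hJ)
    have e : EqOn (pds (Str J) z) (fun p => mulC (-Complex.I) (pdt (Str J) z p)
      + Ff H (p.2 + τ₀, z p)) (Str J) := fun p hp => E1 p hp
    have e2 := pdt_iter_add hJ hm hQ 1 hq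
    have e3 := pdt_iter_clm hJ (mulC (-Complex.I)) (zs.pdt hJ) 1 hq
    have e4 := pds_pdt hJ zs hq
    simp only [Function.iterate_one] at e2 e3
    rw [pdt_congr e hq, e2, e3, ContinuousLinearMap.mul_apply'] at e4
    have h0 := hne q hq
    obtain ⟨s, t⟩ := q
    rw [us.pds_eq hJ hq.1 (((zs.pdt hJ).hasS hq.1 t).div (zs.hasS hq.1 t) h0),
      us.pdt_eq hq.1 (((zs.pdt hJ).hasT hq.1 t).div (zs.hasT hq.1 t) h0),
      hG'.pdt_eq hq.1 ((hQ.hasT hq.1 t).div (zs.hasT hq.1 t) h0), e4, e1]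
    field_simp
    ring
  have E3 : ∀ q ∈ Str J, pdt (Str J) z q = mulC (z q) (u q) := by
    intro q hq
    simp only [hu, ContinuousLinearMap.mul_apply']
    rw [mul_div_cancel₀ _ (hne q hq)]
  have hzj : ∀ q ∈ Str J, ∀ j, 1 ≤ j → j ≤ m + 1 → ‖(pdt (Str J))^[j] z q‖ ≤ M := by
    intro q hq j h1 h2
    rw [hit j q hq]; exact hj q (hsub hq) j h1 h2
  have huj : ∀ q ∈ Str J, ∀ j < m + 1, ‖(pdt (Str J))^[j] u q‖ ≤ U := by
    intro q hq j hjm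
    have e : EqOn u (fun p => mulC (zet (z p)) (pdt (Str J) z p)) (Str J) := by
      intro q hq
      simp only [hu, zet_eq (hlow q hq), ContinuousLinearMap.mul_apply']
      rw [div_eq_mul_inv, mul_comm]
    have hs : Sm J (fun p => mulC (zet (z p)) (pdt (Str J) z p)) := us.congr fun q hq => (e hq).symm
    rw [pdt_iter_congr e j hq]
    have hb := hzj q hq
    obtain ⟨s, t⟩ := q
    rw [pdt_iter_eq hJ hs j hq.1 t]
    simp only [pdt_iter_eq hJ zs _ hq.1 t] at hb
    have hd : ∀ t, pdt (Str J) z (s, t) = deriv (fun t => z (s, t)) t :=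
      fun t => ((zs.hasT hq.1 t).deriv).symm
    simp only [hd]
    exact hU (fun t => z (s, t)) τ₀ t (zs.line hq.1) (hz.disk _ (hsub hq)) hb j hjm
  have hS : S ∈ J := ⟨le_rfl, by linarith⟩
  have hre : ∀ t, Complex.reCLM (u (S, t)) = 0 := by
    intro t
    have hd := zs.hasT hS t
    have h1 : HasDerivAt (fun t => (z (S, t)).re) (pdt (Str J) z (S, t)).re t :=
      Complex.reCLM.hasFDerivAt.comp_hasDerivAt t hd
    have h2 : HasDerivAt (fun t => (z (S, t)).im) (pdt (Str J) z (S, t)).im t :=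
      Complex.imCLM.hasFDerivAt.comp_hasDerivAt t hd
    have h3 := (h1.mul h1).add (h2.mul h2)
    have h4 := h3.unique ((hasDerivAt_const t (1:ℝ)).congr_of_eventuallyEq
      (Eventually.of_forall fun t => by
        have := Complex.normSq_apply (z (S, t))
        rw [Complex.normSq_eq_norm_sq, hz.bd t] at this
        simp only [Pi.add_apply, Pi.mul_apply]
        linarith))
    have h5 : (pdt (Str J) z (S, t)).re * (z (S, t)).re
      + (pdt (Str J) z (S, t)).im * (z (S, t)).im = 0 := by linarith
    rw [Complex.reCLM_apply, hu]
    simp only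
    rw [Complex.div_re, ← add_div, h5, zero_div]
  have him : ∀ t, Complex.imCLM (Gf H (t + τ₀, z (S, t))) = 0 := fun t =>
    Gf_im hH _ (hz.bd t)
  have hpJ : p ∈ Str J := ⟨⟨hp.1, by linarith⟩, mem_univ _⟩
  rw [← hit _ p hpJ]
  refine hC J z u τ₀ S p.2 hJ zs us E1 E2 E3 (fun q hq => hz.disk q (hsub hq))
    (fun q hq j h1 h2 => (hzj q hq j h1 h2).trans (by linarith))
    (fun q hq j h1 => (huj q hq j h1).trans (by linarith)) ?_ ?_ ?_ p hpJ ?_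
  · intro s hs
    exact mem_of_superset (Ico_mem_nhdsGE hs.2) (Ico_subset_Ico_left hs.1)
  · have : J ∩ Icc (S - δ / 2) (S + δ / 2) = Icc S (S + δ / 2) := by
      ext x
      simp only [hJdef, mem_inter_iff, mem_Ico, mem_Icc]
      constructor
      · rintro ⟨⟨a, b⟩, c, d⟩; exact ⟨a, d⟩
      · rintro ⟨a, b⟩; exact ⟨⟨a, by linarith⟩, by linarith, b⟩
    rw [this]; exact isClosed_Icc
  · intro q hq hd
    rcases eq_or_lt_of_le hq.1.1 with h | h
    · right
      refine ⟨h.symm, fun j => ?_⟩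
      obtain ⟨s, t⟩ := q
      simp only at h
      subst h
      have a1 := pdt_iter_zero hJ Complex.reCLM us hS hre j t
      have a2 := pdt_iter_zero hJ Complex.reCLM us hS hre (j + 1) t
      have a3 := pdt_iter_zero hJ Complex.imCLM hG hS him (j + 1) t
      have r := pds_rel hJ us hG E2 j hq
      simp only [Complex.reCLM_apply, Complex.imCLM_apply] at a1 a2 a3
      rw [ip, a1, r]
      simp only [ContinuousLinearMap.mul_apply', Complex.add_im, Complex.mul_im, Complex.neg_re,
        Complex.neg_im, Complex.I_re, Complex.I_im, a2, a3]
      ring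
    · exact Or.inl (Ico_mem_nhds h hq.1.2)
  · have h0 : S ≤ p.1 := hp.1
    nlinarith

theorem tangential {H : ℝ → ℂ → ℝ} (hH : IsAdmissible H) (c₀ : ℝ) (hc : 0 < c₀) (k : ℕ) :
    ∃ C, 0 ≤ C ∧ ∀ (S τ₀ : ℝ) (z : ℝ × ℝ → ℂ), Sol H c₀ S τ₀ z →
      ∀ p ∈ Str (Ici S), ∀ j ≤ k, ‖(pdt (Str (Ici S)))^[j] z p‖ ≤ C := by
  suffices hs : ∀ m : ℕ, ∃ C, 0 ≤ C ∧ ∀ (S τ₀ : ℝ) (z : ℝ × ℝ → ℂ), Sol H c₀ S τ₀ z →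
      ∀ p ∈ Str (Ici S), ∀ j ≤ m + 1, ‖(pdt (Str (Ici S)))^[j] z p‖ ≤ C by
    obtain ⟨C, hC0, hC⟩ := hs k
    exact ⟨C, hC0, fun S τ₀ z hz p hp j hj => hC S τ₀ z hz p hp j (by omega)⟩
  intro m
  induction m with
  | zero =>
    refine ⟨1 + c₀, by positivity, fun S τ₀ z hz p hp j hj => ?_⟩
    interval_cases j
    · exact (hz.disk p hp).trans (by linarith)
    · exact (hz.gt p hp).trans (by linarith)
  | succ m ih =>
    obtain ⟨M, hM, h⟩ := ih
    set δ : ℝ := min 1 (1 / (2 * c₀)) with hδ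
    have d0 : 0 < δ := lt_min one_pos (by positivity)
    have d1 : δ ≤ 1 := min_le_left _ _
    have d2 : c₀ * δ ≤ 1 / 2 := by
      calc c₀ * δ ≤ c₀ * (1 / (2 * c₀)) := mul_le_mul_of_nonneg_left (min_le_right _ _) hc.le
        _ = 1 / 2 := by field_simp
    obtain ⟨C1, hC10, hC1⟩ := interior_bound hH c₀ δ d0 d1 m M hM
    obtain ⟨C2, hC20, hC2⟩ := boundary_bound hH c₀ δ hc d0 d1 d2 m M hM
    refine ⟨M + C1 + C2, by positivity, fun S τ₀ z hz p hp j hj => ?_⟩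
    have hb : ∀ p ∈ Str (Ici S), ∀ j, 1 ≤ j → j ≤ m + 1 → ‖(pdt (Str (Ici S)))^[j] z p‖ ≤ M :=
      fun p hp j _ hj => h S τ₀ z hz p hp j hj
    rcases Nat.lt_or_ge (m + 1) j with h1 | h1
    · obtain rfl : j = m + 2 := by omega
      rcases lt_or_ge (S + δ / 4) p.1 with h2 | h2
      · exact (hC1 S τ₀ z hz hb p hp h2).trans (by linarith)
      · exact (hC2 S τ₀ z hz hb p hp h2).trans (by linarith)
    · exact (h S τ₀ z hz p hp j h1).trans (by linarith)

/-! ### Mixed derivatives -/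

section Mixed
variable {J : Set ℝ}

theorem iF_pdt (hJ : GoodI J) {f : ℝ × ℝ → ℂ} (hf : Sm J f) (i : ℕ) {p : ℝ × ℝ} (hp : p ∈ Str J) :
    ‖iteratedFDerivWithin ℝ i (pdt (Str J) f) (Str J) p‖
      ≤ ‖iteratedFDerivWithin ℝ (i + 1) f (Str J) p‖ := by
  have h := norm_iteratedFDerivWithin_clm_apply_const (c := ((0:ℝ), (1:ℝ))) (n := i)
    (hf.fderivWithin hJ p hp) hJ.udS hp (nat_le_smooth i)
  rw [norm_iteratedFDerivWithin_fderivWithin hJ.udS hp] at h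
  have hn : ‖((0:ℝ), (1:ℝ))‖ = 1 := by simp [Prod.norm_def]
  rw [hn, one_mul] at h
  exact h

theorem iF_pdt_iter (hJ : GoodI J) {f : ℝ × ℝ → ℂ} (hf : Sm J f) (k : ℕ) :
    ∀ (i : ℕ) {p : ℝ × ℝ}, p ∈ Str J →
    ‖iteratedFDerivWithin ℝ i ((pdt (Str J))^[k] f) (Str J) p‖
      ≤ ‖iteratedFDerivWithin ℝ (i + k) f (Str J) p‖ := by
  induction k with
  | zero => intro i p hp; exact le_rfl
  | succ k ih =>
    intro i p hp
    rw [Function.iterate_succ_apply']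
    refine (iF_pdt hJ (hf.pdt_iter hJ k) i hp).trans ((ih (i + 1) hp).trans ?_)
    rw [show i + 1 + k = i + (k + 1) by omega]

theorem iF_clm {E E' : Type*} [NormedAddCommGroup E] [NormedSpace ℝ E] [NormedAddCommGroup E']
    [NormedSpace ℝ E'] (hJ : GoodI J) (L : E →L[ℝ] E') {f : ℝ × ℝ → E} (hf : Sm J f) (i : ℕ)
    {p : ℝ × ℝ} (hp : p ∈ Str J) :
    ‖iteratedFDerivWithin ℝ i (fun p => L (f p)) (Str J) p‖
      ≤ ‖L‖ * ‖iteratedFDerivWithin ℝ i f (Str J) p‖ :=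
  L.norm_iteratedFDerivWithin_comp_left (hf p hp) hJ.udS hp (nat_le_smooth i)

theorem iF_add {E : Type*} [NormedAddCommGroup E] [NormedSpace ℝ E] (hJ : GoodI J)
    {f g : ℝ × ℝ → E} (hf : Sm J f) (hg : Sm J g) (i : ℕ)
    {p : ℝ × ℝ} (hp : p ∈ Str J) :
    ‖iteratedFDerivWithin ℝ i (fun p => f p + g p) (Str J) p‖
      ≤ ‖iteratedFDerivWithin ℝ i f (Str J) p‖ + ‖iteratedFDerivWithin ℝ i g (Str J) p‖ := by
  have := iteratedFDerivWithin_add_apply (i := i) ((hf p hp).of_le (nat_le_smooth i))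
    ((hg p hp).of_le (nat_le_smooth i)) hJ.udS hp
  change ‖iteratedFDerivWithin ℝ i (f + g) (Str J) p‖ ≤ _
  rw [this]; exact norm_add_le _ _

/-- The two coordinate embeddings. -/
noncomputable def embL (φ : ℝ × ℝ →L[ℝ] ℝ) : ℂ →L[ℝ] (ℝ × ℝ →L[ℝ] ℂ) :=
  ContinuousLinearMap.smulRightL ℝ (ℝ × ℝ) ℂ φ

theorem iF_succ (hJ : GoodI J) {f : ℝ × ℝ → ℂ} (hf : Sm J f) (i : ℕ) {p : ℝ × ℝ}
    (hp : p ∈ Str J) :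
    ‖iteratedFDerivWithin ℝ (i + 1) f (Str J) p‖
      ≤ ‖embL (ContinuousLinearMap.fst ℝ ℝ ℝ)‖
          * ‖iteratedFDerivWithin ℝ i (pds (Str J) f) (Str J) p‖
        + ‖embL (ContinuousLinearMap.snd ℝ ℝ ℝ)‖
          * ‖iteratedFDerivWithin ℝ i (pdt (Str J) f) (Str J) p‖ := by
  rw [← norm_iteratedFDerivWithin_fderivWithin hJ.udS hp]
  have e : fderivWithin ℝ f (Str J) = fun q =>
      embL (ContinuousLinearMap.fst ℝ ℝ ℝ) (pds (Str J) f q)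
        + embL (ContinuousLinearMap.snd ℝ ℝ ℝ) (pdt (Str J) f q) := by
    funext q
    ext
    · simp [embL, pds, pdt]
    · simp [embL, pds, pdt]
  rw [e]
  refine (iF_add hJ ?_ ?_ i hp).trans (add_le_add (iF_clm hJ _ (hf.pds hJ) i hp)
    (iF_clm hJ _ (hf.pdt hJ) i hp))
  · exact (embL _).contDiff.comp_contDiffOn (hf.pds hJ)
  · exact (embL _).contDiff.comp_contDiffOn (hf.pdt hJ)

theorem iF_gam (hJ : GoodI J) (τ₀ : ℝ) {z : ℝ × ℝ → ℂ} (hz : Sm J z) (i : ℕ) (hi : 1 ≤ i) {M : ℝ}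
    {p : ℝ × ℝ} (hp : p ∈ Str J) (hM : ‖iteratedFDerivWithin ℝ i z (Str J) p‖ ≤ M) :
    ‖iteratedFDerivWithin ℝ i (fun p : ℝ × ℝ => (p.2 + τ₀, z p)) (Str J) p‖ ≤ max 1 M := by
  have h1 : ContDiff ℝ (⊤ : ℕ∞) (fun p : ℝ × ℝ => p.2 + τ₀) := contDiff_snd.add contDiff_const
  rw [iteratedFDerivWithin_prodMk h1.contDiffWithinAt (hz p hp) hJ.udS hp (nat_le_smooth i)]
  rw [ContinuousMultilinearMap.opNorm_prod]
  refine max_le_max ?_ hM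
  obtain ⟨j, rfl⟩ : ∃ j, i = j + 1 := ⟨i - 1, by omega⟩
  rw [← norm_iteratedFDerivWithin_fderivWithin hJ.udS hp]
  have e : EqOn (fderivWithin ℝ (fun p : ℝ × ℝ => p.2 + τ₀) (Str J))
      (fun _ => ContinuousLinearMap.snd ℝ ℝ ℝ) (Str J) := by
    intro q hq
    have : HasFDerivAt (fun p : ℝ × ℝ => p.2 + τ₀) (ContinuousLinearMap.snd ℝ ℝ ℝ) q :=
      hasFDerivAt_snd.add_const τ₀
    exact this.hasFDerivWithinAt.fderivWithin (hJ.udS q hq)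
  rw [iteratedFDerivWithin_congr e hp]
  cases j with
  | zero =>
    rw [norm_iteratedFDerivWithin_zero]
    exact ContinuousLinearMap.norm_snd_le ℝ ℝ ℝ
  | succ j => rw [iteratedFDerivWithin_succ_const]; simp

theorem iF_comp {G : ℝ × ℂ → ℂ} (hG : Per G) (k : ℕ) (M : ℝ) :
    ∃ C, 0 ≤ C ∧ ∀ (J : Set ℝ) (z : ℝ × ℝ → ℂ) (τ₀ : ℝ), GoodI J → Sm J z → ∀ p ∈ Str J, ‖z p‖ ≤ 1 →
      (∀ j, 1 ≤ j → j ≤ k → ‖iteratedFDerivWithin ℝ j z (Str J) p‖ ≤ M) →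
      ‖iteratedFDerivWithin ℝ k (fun p => G (p.2 + τ₀, z p)) (Str J) p‖ ≤ C := by
  obtain ⟨B, hB0, hB⟩ := hG.bound_le k
  refine ⟨k.factorial * B * (max 1 M) ^ k, by positivity, fun J z τ₀ hJ hz p hp hz1 hj => ?_⟩
  exact norm_iteratedFDerivWithin_comp_le (𝕜 := ℝ) (n := k) (N := (⊤ : ℕ∞)) (D := max 1 M) (C := B)
    (t := univ) (contDiffOn_univ.2 hG.sm) (sm_gam τ₀ hz) (nat_le_smooth k) uniqueDiffOn_univ hJ.udS
    (mapsTo_univ _ _) hp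
    (fun a ha => by rw [iteratedFDerivWithin_univ]; exact hB a ha _ _ hz1)
    (fun a ha1 ha => by
      refine (iF_gam hJ τ₀ hz a ha1 hp (hj a ha1 ha)).trans ?_
      exact le_self_pow₀ (le_max_left _ _) (by omega))

end Mixed

theorem mixed {H : ℝ → ℂ → ℝ} (hH : IsAdmissible H) (c₀ : ℝ) (hc : 0 < c₀) (N : ℕ) :
    ∃ C, 0 ≤ C ∧ ∀ (S τ₀ : ℝ) (z : ℝ × ℝ → ℂ), Sol H c₀ S τ₀ z →
      ∀ p ∈ Str (Ici S), ∀ i k, i + k ≤ N →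
        ‖iteratedFDerivWithin ℝ i ((pdt (Str (Ici S)))^[k] z) (Str (Ici S)) p‖ ≤ C := by
  induction N with
  | zero =>
    refine ⟨1, zero_le_one, fun S τ₀ z hz p hp i k h => ?_⟩
    obtain ⟨rfl, rfl⟩ : i = 0 ∧ k = 0 := by omega
    rw [norm_iteratedFDerivWithin_zero]
    exact hz.disk p hp
  | succ N ih =>
    obtain ⟨M, hM0, hM⟩ := ih
    obtain ⟨Q, hQ0, hQ⟩ := iF_comp (per_Ff hH) N M
    obtain ⟨T, hT0, hT⟩ := tangential hH c₀ hc (N + 1)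
    have step : ∀ i, ∃ X, 0 ≤ X ∧ ∀ (S τ₀ : ℝ) (z : ℝ × ℝ → ℂ), Sol H c₀ S τ₀ z →
        ∀ p ∈ Str (Ici S), ∀ k, i + k = N + 1 →
        ‖iteratedFDerivWithin ℝ i ((pdt (Str (Ici S)))^[k] z) (Str (Ici S)) p‖ ≤ X := by
      intro i
      induction i with
      | zero =>
        refine ⟨T, hT0, fun S τ₀ z hz p hp k hk => ?_⟩
        rw [norm_iteratedFDerivWithin_zero]
        exact hT S τ₀ z hz p hp k (by omega)
      | succ i ih =>
        obtain ⟨X, hX0, hX⟩ := ih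
        refine ⟨‖embL (ContinuousLinearMap.fst ℝ ℝ ℝ)‖ * (‖mulC (-Complex.I)‖ * X + Q)
          + ‖embL (ContinuousLinearMap.snd ℝ ℝ ℝ)‖ * X, by positivity,
          fun S τ₀ z hz p hp k hk => ?_⟩
        have hJ := goodI_Ici S
        have hy := hz.sm.pdt_iter hJ k
        have hFs : Sm (Ici S) (fun p => Ff H (p.2 + τ₀, z p)) := sm_comp (per_Ff hH) τ₀ hz.sm
        have hm : Sm (Ici S) (fun p => mulC (-Complex.I) (pdt (Str (Ici S)) z p)) :=
          (mulC (-Complex.I)).contDiff.comp_contDiffOn (hz.sm.pdt hJ)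
        have hy1 := hz.sm.pdt_iter hJ (k + 1)
        have hm1 : Sm (Ici S) (fun p => mulC (-Complex.I) ((pdt (Str (Ici S)))^[k + 1] z p)) :=
          (mulC (-Complex.I)).contDiff.comp_contDiffOn hy1
        have e : EqOn (pds (Str (Ici S)) z) (fun p => mulC (-Complex.I) (pdt (Str (Ici S)) z p)
          + Ff H (p.2 + τ₀, z p)) (Str (Ici S)) := fun p hp => hz.eq p hp
        have e1 : EqOn (pds (Str (Ici S)) ((pdt (Str (Ici S)))^[k] z))
            (fun p => mulC (-Complex.I) ((pdt (Str (Ici S)))^[k + 1] z p)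
              + (pdt (Str (Ici S)))^[k] (fun p => Ff H (p.2 + τ₀, z p)) p) (Str (Ici S)) := by
          refine (pds_pdt_iter hJ hz.sm k).trans ((pdt_iter_congr e k).trans
            ((pdt_iter_add hJ hm hFs k).trans ?_))
          intro q hq
          simp only [Function.iterate_succ_apply]
          rw [pdt_iter_clm hJ (mulC (-Complex.I)) (hz.sm.pdt hJ) k hq]
        have hX1 := hX S τ₀ z hz p hp (k + 1) (by omega)
        refine (iF_succ hJ hy i hp).trans (add_le_add ?_ ?_)
        · refine mul_le_mul_of_nonneg_left ?_ (by positivity)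
          rw [iteratedFDerivWithin_congr e1 hp]
          refine (iF_add hJ hm1 (hFs.pdt_iter hJ k) i hp).trans (add_le_add ?_ ?_)
          · exact (iF_clm hJ (mulC (-Complex.I)) hy1 i hp).trans
              (mul_le_mul_of_nonneg_left hX1 (norm_nonneg _))
          · refine (iF_pdt_iter hJ hFs k i hp).trans ?_
            rw [show i + k = N by omega]
            exact hQ _ z τ₀ hJ hz.sm p hp (hz.disk p hp)
              (fun j _ hj => hM S τ₀ z hz p hp j 0 (by omega))
        · refine mul_le_mul_of_nonneg_left ?_ (by positivity)
          rw [Function.iterate_succ_apply'] at hX1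
          exact hX1
    choose X hX0 hX using step
    have hs : 0 ≤ ∑ i ∈ Finset.range (N + 2), X i := Finset.sum_nonneg fun i _ => hX0 i
    refine ⟨M + ∑ i ∈ Finset.range (N + 2), X i, by positivity, fun S τ₀ z hz p hp i k h => ?_⟩
    rcases Nat.lt_or_ge N (i + k) with h1 | h1
    · have h2 := hX i S τ₀ z hz p hp k (by omega)
      have h3 := Finset.single_le_sum (f := X) (fun i _ => hX0 i)
        (Finset.mem_range.2 (show i < N + 2 by omega))
      linarith
    · have := hM S τ₀ z hz p hp i k h1
      linarith

/-- **Uniform `C^∞`-bounds from gradient bounds (after Hofer).**  Given `H` and a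
constant `c₀ > 0`, there are constants `c_k > 0`, depending only on `H` and `c₀`,
bounding all partial derivatives of total order `k+1` of every periodic solution of
the Floer equation on a half plane `[S,∞) × ℝ` with unit-circle boundary values and
gradient bounded by `c₀`. -/
theorem uniform_higher_derivative_bounds
    (H : ℝ → ℂ → ℝ) (hH : IsAdmissible H) (c₀ : ℝ) (hc₀ : 0 < c₀) :
    ∃ c : ℕ → ℝ, (∀ k, 0 < c k) ∧
      ∀ (n : ℕ), 1 ≤ n → ∀ (S τ₀ : ℝ), S ≤ 0 →
        ∀ z : ℝ × ℝ → ℂ,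
          ContDiffOn ℝ (⊤ : ℕ∞) z (HalfPlaneFrom S) →
          (∀ p ∈ HalfPlaneFrom S, z p ∈ Disk) →
          (∀ s t : ℝ, S ≤ s → z (s, t + n) = z (s, t)) →
          (∀ p ∈ HalfPlaneFrom S,
            pds (HalfPlaneFrom S) z p +
              Complex.I * (pdt (HalfPlaneFrom S) z p - XH H (p.2 + τ₀) (z p)) = 0) →
          (∀ t : ℝ, ‖z (S, t)‖ = 1) →
          (∀ p ∈ HalfPlaneFrom S,
            ‖pds (HalfPlaneFrom S) z p‖ ≤ c₀ ∧ ‖pdt (HalfPlaneFrom S) z p‖ ≤ c₀) →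
          ∀ k : ℕ, 1 ≤ k → ∀ p ∈ HalfPlaneFrom S,
            ∀ v : Fin (k + 1) → ℝ × ℝ,
              (∀ j, v j = ((1:ℝ), (0:ℝ)) ∨ v j = ((0:ℝ), (1:ℝ))) →
              ‖iteratedFDerivWithin ℝ (k + 1) z (HalfPlaneFrom S) p v‖ ≤ c k := by
  choose C hC0 hC using fun N => mixed hH c₀ hc₀ N
  refine ⟨fun k => C (k + 1) + 1, fun k => by have := hC0 (k + 1); linarith, ?_⟩
  intro n _ S τ₀ _ z hz hD _ hE hb hg k _ p hp v hv
  have hsol : Sol H c₀ S τ₀ z := by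
    refine ⟨hz, fun p hp => ?_, fun p hp => ?_, hb, fun p hp => (hg p hp).1, fun p hp => (hg p hp).2⟩
    · have := hD p hp
      simpa [Disk] using this
    · have := hE p hp
      change pds (HalfPlaneFrom S) z p = -Complex.I * pdt (HalfPlaneFrom S) z p
        + Complex.I * XH H (p.2 + τ₀) (z p)
      linear_combination this
  have h1 := hC (k + 1) S τ₀ z hsol p hp (k + 1) 0 (by omega)
  have hone : ∀ j, ‖v j‖ = 1 := by
    intro j
    rcases hv j with h | h <;> rw [h] <;> simp [Prod.norm_def]
  have h2 := (iteratedFDerivWithin ℝ (k + 1) z (HalfPlaneFrom S) p).le_opNorm v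
  simp only [hone, Finset.prod_const_one, mul_one] at h2
  have h3 : ‖iteratedFDerivWithin ℝ (k + 1) z (HalfPlaneFrom S) p‖ ≤ C (k + 1) := h1
  linarith
end
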